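/- arXiv:2507.00183 — 3 statements merged into one kernel-verified Lean document; each statement's English description precedes it below -/
import Mathlib

section
/- Fix C' > 0 and γ ∈ (0,1). There exist constants c₁, c₂ > 0 and, for each pair of multi-indices (α,β'), a constant C_{α,β'} > 0, all independent of h ∈ (0,1] and q ∈ ℝ², such that the following holds: whenever χ : ℝ²×ℝ² → ℝ satisfies |x| < C' and p̃_q(x,ξ) > γ at every point (x,ξ) of supp χ (and p̃_q > γ/2 on an ε-neighborhood of supp χ for some ε > 0), there exists a smooth function P̃ : ℝ²×ℝ² → ℝ with: (a) P̃ ≡ p̃_q on supp χ; (b) c₁(1+|ξ|²) ≤ P̃(x,ξ) ≤ c₂(1+|ξ|²) for all (x,ξ); (c) |∂_ξ^α ∂_x^{β'} P̃(x,ξ)| ≤ C_{α,β'} h^{−|β'|/2} (1+|ξ|²) for all (x,ξ) and all multi-indices α, β'; (d) P̃(x,ξ) > γ/2 everywhere. -/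
noncomputable section

open MeasureTheory Complex

abbrev R2 : Type := EuclideanSpace ℝ (Fin 2)

/-- Partial derivative of a complex-valued function in coordinate direction `j`. -/
def pdC (j : Fin 2) (f : R2 → ℂ) (x : R2) : ℂ :=
  fderiv ℝ f x (EuclideanSpace.single j 1)

/-- The operator `D_j = -i ∂_j` acting on complex-valued functions. -/
def Dop (j : Fin 2) (f : R2 → ℂ) (x : R2) : ℂ := -Complex.I * pdC j f x

/-- Partial derivative of a real-valued function in coordinate direction `j`. -/
def pdR (j : Fin 2) (f : R2 → ℝ) (x : R2) : ℝ :=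
  fderiv ℝ f x (EuclideanSpace.single j 1)

/-- The Laplacian of a real-valued function. -/
def lapR (f : R2 → ℝ) (x : R2) : ℝ := pdR 0 (pdR 0 f) x + pdR 1 (pdR 1 f) x

/-- The rescaled potential `φ_h(x) = φ(h^{-1/2} x)`. -/
def phih (φ : R2 → ℝ) (h : ℝ) (x : R2) : ℝ := φ ((h ^ (-(1/2 : ℝ)) : ℝ) • x)

/-- `A u = (h/2) D₁ u - (h/2) (∂₂ φ_h) u`. -/
def opAh (φ : R2 → ℝ) (h : ℝ) (u : R2 → ℂ) (x : R2) : ℂ :=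
  ((h / 2 : ℝ) : ℂ) * Dop 0 u x - ((h / 2 * pdR 1 (phih φ h) x : ℝ) : ℂ) * u x

/-- `B u = (h/2) D₂ u + (h/2) (∂₁ φ_h) u`. -/
def opBh (φ : R2 → ℝ) (h : ℝ) (u : R2 → ℂ) (x : R2) : ℂ :=
  ((h / 2 : ℝ) : ℂ) * Dop 1 u x + ((h / 2 * pdR 0 (phih φ h) x : ℝ) : ℂ) * u x

/-- `P u = A² u + B² u - (h²/4)(Δ φ_h) u - u`. -/
def opPh (φ : R2 → ℝ) (h : ℝ) (u : R2 → ℂ) (x : R2) : ℂ :=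
  opAh φ h (opAh φ h u) x + opBh φ h (opBh φ h u) x
    - ((h ^ 2 / 4 * lapR (phih φ h) x : ℝ) : ℂ) * u x - u x

/-- The symbol `ã_q(x,ξ) = ξ₁/2 - (h/2)(∂₂φ_h)(x+q) + (h/2)(∂₂φ_h)(q)`. -/
def symA (φ : R2 → ℝ) (h : ℝ) (q : R2) (z : R2 × R2) : ℝ :=
  z.2 0 / 2 - h / 2 * pdR 1 (phih φ h) (z.1 + q) + h / 2 * pdR 1 (phih φ h) q

/-- The symbol `b̃_q(x,ξ) = ξ₂/2 + (h/2)(∂₁φ_h)(x+q) - (h/2)(∂₁φ_h)(q)`. -/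
def symB (φ : R2 → ℝ) (h : ℝ) (q : R2) (z : R2 × R2) : ℝ :=
  z.2 1 / 2 + h / 2 * pdR 0 (phih φ h) (z.1 + q) - h / 2 * pdR 0 (phih φ h) q

/-- The symbol `p̃_q = ã_q² + b̃_q² - ((h²/4)(Δφ_h)(x) + 1)`. -/
def symP (φ : R2 → ℝ) (h : ℝ) (q : R2) (z : R2 × R2) : ℝ :=
  symA φ h q z ^ 2 + symB φ h q z ^ 2 - (h ^ 2 / 4 * lapR (phih φ h) z.1 + 1)

/-- Directional derivative of a function on phase space `ℝ²×ℝ²`. -/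
def pdir (v : R2 × R2) (f : R2 × R2 → ℝ) (z : R2 × R2) : ℝ := fderiv ℝ f z v

/-- The `i`-th coordinate direction in the `x`-variables. -/
def eX (i : Fin 2) : R2 × R2 := (EuclideanSpace.single i 1, 0)

/-- The `i`-th coordinate direction in the `ξ`-variables. -/
def eXi (i : Fin 2) : R2 × R2 := (0, EuclideanSpace.single i 1)

/-- The mixed partial derivative `∂_ξ^α ∂_x^β f` on phase space. -/
def mixedPartial (α β : Fin 2 → ℕ) (f : R2 × R2 → ℝ) : R2 × R2 → ℝ :=
  (pdir (eX 0))^[β 0] ((pdir (eX 1))^[β 1] ((pdir (eXi 0))^[α 0] ((pdir (eXi 1))^[α 1] f)))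

/-
In the variable `y = x / √h` the symbol `p̃_q` becomes `|ξ - A|² / 4 + V` with derivatives of all
orders bounded uniformly in `h` and `q`, once `A` is cut off to `|x| ≲ C'`: the cut-off is needed
because `φ` is controlled only from the second derivative on, so that `A` may grow linearly in `x`.
The cut-off symbol is bounded below by `(1 + |ξ|²) / 8 - K`. Composing it with a smooth function
that is the identity on `[γ, ∞)` and takes values above `γ / 2` makes it elliptic; this changes the
symbol only where `ξ` is bounded, hence keeps it in the same symbol class. Undoing the dilation
costs `h^(-1/2)` for each `x`-derivative.
-/

open Asymptotics Filter
open scoped ContDiff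

/-- A family of smooth functions lying uniformly in the symbol class `S(w)`: each derivative is
bounded by a constant multiple of the order function `w`, with the same constant for all members
of the family. The domination over all indices and all points is encoded as `=O[⊤]`. -/
structure UniformSymbol {ι E F : Type*} [NormedAddCommGroup E] [NormedSpace ℝ E]
    [NormedAddCommGroup F] [NormedSpace ℝ F] (w : ι → E → ℝ) (f : ι → E → F) : Prop where
  contDiff : ∀ i, ContDiff ℝ ∞ (f i)
  isBigO : ∀ n, (fun p : ι × E => iteratedFDeriv ℝ n (f p.1) p.2) =O[⊤] fun p => w p.1 p.2

section

variable {ι E F G H : Type*} [NormedAddCommGroup E] [NormedSpace ℝ E]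
  [NormedAddCommGroup F] [NormedSpace ℝ F] [NormedAddCommGroup G] [NormedSpace ℝ G]
  [NormedAddCommGroup H] [NormedSpace ℝ H]

theorem exists_norm_iteratedFDeriv_le_of_isCompact {g : E → F} (hg : ContDiff ℝ ∞ g) {s : Set E}
    (hs : IsCompact s) (n : ℕ) :
    ∃ B ≥ 0, ∀ m ≤ n, ∀ x ∈ s, ‖iteratedFDeriv ℝ m g x‖ ≤ B := by
  have hcont : Continuous fun x => ∑ m ∈ Finset.range (n + 1), ‖iteratedFDeriv ℝ m g x‖ :=
    continuous_finsetSum _ fun m _ => (hg.continuous_iteratedFDeriv (mod_cast le_top)).norm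
  obtain ⟨B, hB⟩ := hs.exists_bound_of_continuousOn hcont.continuousOn
  refine ⟨max 0 B, le_max_left _ _, fun m hm x hx => le_max_of_le_right <|
    .trans ?_ ((le_abs_self _).trans (hB x hx))⟩
  exact Finset.single_le_sum (f := fun m => ‖iteratedFDeriv ℝ m g x‖)
    (fun _ _ => norm_nonneg _) (Finset.mem_range_succ_iff.2 hm)

namespace UniformSymbol

variable {w w' : ι → E → ℝ}

theorem mono {f : ι → E → F} (hf : UniformSymbol w f)
    (hw : (fun p : ι × E => w p.1 p.2) =O[⊤] fun p => w' p.1 p.2) : UniformSymbol w' f :=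
  ⟨hf.contDiff, fun n => (hf.isBigO n).trans hw⟩

theorem isBigO_apply {f : ι → E → F} (hf : UniformSymbol w f) :
    (fun p : ι × E => f p.1 p.2) =O[⊤] fun p => w p.1 p.2 :=
  IsBigO.of_norm_left (by simpa only [norm_iteratedFDeriv_zero] using (hf.isBigO 0).norm_left)

theorem exists_norm_apply_le {f : ι → E → F} (hf : UniformSymbol w f) (hw : ∀ i x, 0 ≤ w i x) :
    ∃ C > 0, ∀ i x, ‖f i x‖ ≤ C * w i x := by
  obtain ⟨C, hC, hfC⟩ := hf.isBigO_apply.exists_pos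
  refine ⟨C, hC, fun i x => ?_⟩
  simpa only [Real.norm_of_nonneg (hw i x)] using isBigOWith_top.1 hfC (i, x)

protected theorem fderiv {f : ι → E → F} (hf : UniformSymbol w f) :
    UniformSymbol w fun i => fderiv ℝ (f i) where
  contDiff i := (contDiff_infty_iff_fderiv.1 (hf.contDiff i)).2
  isBigO n := by
    refine IsBigO.of_norm_left ?_
    simpa only [norm_iteratedFDeriv_fderiv] using (hf.isBigO (n + 1)).norm_left

theorem of_fderiv {f : ι → E → F} (hf : ∀ i, Differentiable ℝ (f i))
    (hf₀ : (fun p : ι × E => f p.1 p.2) =O[⊤] fun p => w p.1 p.2)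
    (hf' : UniformSymbol w fun i => fderiv ℝ (f i)) : UniformSymbol w f where
  contDiff i := contDiff_infty_iff_fderiv.2 ⟨hf i, hf'.contDiff i⟩
  isBigO
    | 0 => by
      refine IsBigO.of_norm_left ?_
      simpa only [norm_iteratedFDeriv_zero] using hf₀.norm_left
    | n + 1 => by
      refine IsBigO.of_norm_left ?_
      simpa only [norm_iteratedFDeriv_fderiv] using (hf'.isBigO n).norm_left

theorem add {f g : ι → E → F} (hf : UniformSymbol w f) (hg : UniformSymbol w g) :
    UniformSymbol w fun i x => f i x + g i x where
  contDiff i := (hf.contDiff i).add (hg.contDiff i)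
  isBigO n := ((hf.isBigO n).add (hg.isBigO n)).congr_left fun _ =>
    (iteratedFDeriv_add_apply (contDiff_infty.1 (hf.contDiff _) n).contDiffAt
      (contDiff_infty.1 (hg.contDiff _) n).contDiffAt).symm

theorem bilinear (B : F →L[ℝ] G →L[ℝ] H) {f : ι → E → F} {g : ι → E → G}
    (hf : UniformSymbol w f) (hg : UniformSymbol w' g) :
    UniformSymbol (fun i x => w i x * w' i x) fun i x => B (f i x) (g i x) where
  contDiff i := B.isBoundedBilinearMap.contDiff.comp₂ (hf.contDiff i) (hg.contDiff i)
  isBigO n := by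
    have hterm (k : ℕ) : (fun p : ι × E => (n.choose k : ℝ) *
        ‖iteratedFDeriv ℝ k (f p.1) p.2‖ * ‖iteratedFDeriv ℝ (n - k) (g p.1) p.2‖) =O[⊤]
          fun p => w p.1 p.2 * w' p.1 p.2 :=
      ((hf.isBigO k).norm_left.const_mul_left _).mul (hg.isBigO (n - k)).norm_left
    refine (IsBigO.of_norm_le fun _ => ?_).trans
      ((IsBigO.fun_sum fun k (_ : k ∈ Finset.range (n + 1)) => hterm k).const_mul_left ‖B‖)
    exact B.norm_iteratedFDeriv_le_of_bilinear (contDiff_infty.1 (hf.contDiff _) n)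
      (contDiff_infty.1 (hg.contDiff _) n) _ le_rfl

theorem const {c : ι → F} (hc : c =O[⊤] fun _ => (1 : ℝ)) :
    UniformSymbol (fun _ _ => 1) fun i (_ : E) => c i := by
  have hc' : (fun p : ι × E => c p.1) =O[⊤] fun _ => (1 : ℝ) := hc.comp_tendsto tendsto_top
  refine ⟨fun i => contDiff_const, fun n => ?_⟩
  rcases eq_or_ne n 0 with rfl | hn
  · exact IsBigO.of_norm_left (by simpa only [norm_iteratedFDeriv_zero] using hc'.norm_left)
  · simpa only [iteratedFDeriv_const_of_ne hn] using! isBigO_zero _ _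

theorem clm_comp {f : ι → E → F} (hf : UniformSymbol w f) (L : F →L[ℝ] G) :
    UniformSymbol w fun i x => L (f i x) where
  contDiff i := L.contDiff.comp (hf.contDiff i)
  isBigO n := .trans (.of_bound ‖L‖ <| .of_forall fun _ =>
    L.norm_iteratedFDeriv_comp_left (hf.contDiff _).contDiffAt (mod_cast le_top)) (hf.isBigO n)

theorem fderiv_clm_comp {f : ι → E → F} (hf : ∀ i, Differentiable ℝ (f i))
    (hf' : UniformSymbol w fun i => fderiv ℝ (f i)) (L : F →L[ℝ] G) :
    UniformSymbol w fun i => fderiv ℝ fun x => L (f i x) := by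
  have hcomp (i : ι) : fderiv ℝ (fun x => L (f i x)) =
      fun x => ContinuousLinearMap.compL ℝ E F G L (fderiv ℝ (f i) x) :=
    funext fun x => (L.hasFDerivAt.comp x (hf i x).hasFDerivAt).fderiv
  simpa only [hcomp] using hf'.clm_comp (ContinuousLinearMap.compL ℝ E F G L)

theorem comp_clm {v : ι → F → ℝ} {f : ι → F → G} (hf : UniformSymbol v f) {L : ι → E →L[ℝ] F}
    (hL : L =O[⊤] fun _ => (1 : ℝ)) :
    UniformSymbol (fun i x => v i (L i x)) fun i x => f i (L i x) where
  contDiff i := (hf.contDiff i).comp (L i).contDiff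
  isBigO n := by
    have hfL : (fun p : ι × E => ‖iteratedFDeriv ℝ n (f p.1) (L p.1 p.2)‖ * ‖L p.1‖ ^ n) =O[⊤]
        fun p => v p.1 (L p.1 p.2) := by
      simpa only [Function.comp_def, one_pow, mul_one] using
        ((hf.isBigO n).norm_left.comp_tendsto (k := fun p : ι × E => (p.1, L p.1 p.2))
          tendsto_top).mul ((hL.norm_left.comp_tendsto (k := Prod.fst) tendsto_top).pow n)
    refine (IsBigO.of_norm_le fun p => ?_).trans hfL
    calc ‖iteratedFDeriv ℝ n (f p.1 ∘ L p.1) p.2‖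
        = ‖(iteratedFDeriv ℝ n (f p.1) (L p.1 p.2)).compContinuousLinearMap fun _ => L p.1‖ := by
          rw [(L p.1).iteratedFDeriv_comp_right (hf.contDiff _) _ (mod_cast le_top)]
      _ ≤ ‖iteratedFDeriv ℝ n (f p.1) (L p.1 p.2)‖ * ∏ _ : Fin n, ‖L p.1‖ :=
          ContinuousMultilinearMap.norm_compContinuousLinearMap_le _ _
      _ = ‖iteratedFDeriv ℝ n (f p.1) (L p.1 p.2)‖ * ‖L p.1‖ ^ n := by
          rw [Finset.prod_const, Finset.card_univ, Fintype.card_fin]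

theorem comp_add_right {f : ι → E → F} (hf : UniformSymbol w f) (a : ι → E) :
    UniformSymbol (fun i x => w i (x + a i)) fun i x => f i (x + a i) where
  contDiff i := (hf.contDiff i).comp (contDiff_id.add contDiff_const)
  isBigO n := by
    simpa only [iteratedFDeriv_comp_add_right] using!
      (hf.isBigO n).comp_tendsto (k := fun p : ι × E => (p.1, p.2 + a p.1)) tendsto_top

theorem clm (L : E →L[ℝ] F) : UniformSymbol (fun (_ : ι) x => 1 + ‖L x‖) fun _ => L := by
  refine of_fderiv (fun _ => L.differentiable) (.of_norm_le fun p => ?_) ?_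
  · linarith
  · have hL : UniformSymbol (fun _ _ => 1) fun (_ : ι) (_ : E) => L :=
      .const (isBigO_const_one ℝ L ⊤)
    have hL' : (fun _ : ι => fderiv ℝ L) = fun _ _ => L := by
      ext1; ext1; exact L.fderiv
    rw [hL']
    exact hL.mono <| .of_norm_le fun p => by simp

theorem of_hasCompactSupport {f : E → F} (hf : ContDiff ℝ ∞ f) (hsupp : HasCompactSupport f)
    {w : E → ℝ} (hw : Continuous w) (hw₀ : ∀ x, w x ≠ 0) :
    UniformSymbol (fun _ : ι => w) fun _ => f where
  contDiff _ := hf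
  isBigO n := by
    obtain ⟨C, hC⟩ := Continuous.bounded_above_of_compact_support
      ((hw.inv₀ hw₀).smul (hf.continuous_iteratedFDeriv (m := n) (mod_cast le_top)))
      ((hsupp.iteratedFDeriv (𝕜 := ℝ) n).smul_left)
    refine isBigO_top.2 ⟨C, fun p => ?_⟩
    have hw_pos : 0 < ‖w p.2‖ := norm_pos_iff.2 (hw₀ p.2)
    simpa only [Pi.smul_apply', Pi.inv_apply, norm_smul, norm_inv, inv_mul_le_iff₀ hw_pos,
      mul_comm C] using hC p.2

theorem exists_norm_iteratedFDeriv_le {f : ι → E → F} (hf : UniformSymbol w f) (n : ℕ) :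
    ∃ D ≥ 0, ∀ m ≤ n, ∀ i x, ‖iteratedFDeriv ℝ m (f i) x‖ ≤ D * ‖w i x‖ := by
  choose D hD₀ hD using fun m => (hf.isBigO m).exists_nonneg
  simp only [isBigOWith_top] at hD
  refine ⟨∑ m ∈ Finset.range (n + 1), D m, Finset.sum_nonneg fun m _ => hD₀ m,
    fun m hm i x => (hD m (i, x)).trans ?_⟩
  gcongr
  exact Finset.single_le_sum (fun k _ => hD₀ k) (Finset.mem_range_succ_iff.2 hm)

theorem comp_left {g : F → G} (hg : ContDiff ℝ ∞ g) {f : ι → E → F} (hf : UniformSymbol w f)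
    {s : Set F} (hs : IsCompact s) {W : ℝ}
    (hfs : ∀ i x, f i x ∈ tsupport g → f i x ∈ s ∧ ‖w i x‖ ≤ W) :
    UniformSymbol (fun _ _ => 1) fun i x => g (f i x) where
  contDiff i := hg.comp (hf.contDiff i)
  isBigO n := by
    obtain ⟨B, hB₀, hB⟩ := exists_norm_iteratedFDeriv_le_of_isCompact hg hs n
    obtain ⟨D, hD₀, hD⟩ := hf.exists_norm_iteratedFDeriv_le n
    refine isBigO_top.2 ⟨n.factorial * B * max 1 (D * W) ^ n, fun ⟨i, x⟩ => ?_⟩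
    rw [norm_one, mul_one]
    by_cases hx : f i x ∈ tsupport g
    · obtain ⟨hxs, hxW⟩ := hfs i x hx
      refine norm_iteratedFDeriv_comp_le (contDiff_infty.1 hg n)
        (contDiff_infty.1 (hf.contDiff i) n) le_rfl x (fun m hm => hB m hm _ hxs)
        fun m hm₁ hm => ?_
      calc ‖iteratedFDeriv ℝ m (f i) x‖ ≤ D * ‖w i x‖ := hD m hm i x
        _ ≤ max 1 (D * W) := le_max_of_le_right (by gcongr)
        _ ≤ max 1 (D * W) ^ m := le_self_pow₀ (le_max_left _ _) (by lia)
    · have hx' : x ∉ Function.support (iteratedFDeriv ℝ n (g ∘ f i)) := fun h =>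
        hx (tsupport_comp_subset_preimage g (hf.contDiff i).continuous
          (support_iteratedFDeriv_subset n h))
      rw [show iteratedFDeriv ℝ n (fun x => g (f i x)) x = 0 from Function.notMem_support.1 hx',
        norm_zero]
      positivity

end UniformSymbol

end

/-- A smooth version of `max a`, equal to the identity on `[b, ∞)`. -/
def smoothFloor (a b t : ℝ) : ℝ :=
  a + (t - a) * Real.smoothTransition ((t - a) / (b - a))

theorem contDiff_smoothFloor (a b : ℝ) : ContDiff ℝ ∞ (smoothFloor a b) :=
  contDiff_const.add <| (contDiff_id.sub contDiff_const).mul <|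
    Real.smoothTransition.contDiff.comp ((contDiff_id.sub contDiff_const).div_const _)

theorem smoothFloor_of_le {a b t : ℝ} (hab : a < b) (ht : b ≤ t) : smoothFloor a b t = t := by
  have hone : 1 ≤ (t - a) / (b - a) := (one_le_div (sub_pos.2 hab)).2 (by linarith)
  rw [smoothFloor, Real.smoothTransition.one_of_one_le hone]
  ring

theorem le_smoothFloor {a b : ℝ} (hab : a < b) (t : ℝ) : a ≤ smoothFloor a b t := by
  rw [smoothFloor, le_add_iff_nonneg_right]
  rcases le_total t a with ht | ht
  · rw [Real.smoothTransition.zero_of_nonpos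
      (div_nonpos_of_nonpos_of_nonneg (sub_nonpos.2 ht) (sub_pos.2 hab).le), mul_zero]
  · exact mul_nonneg (sub_nonneg.2 ht) (Real.smoothTransition.nonneg _)

theorem sub_le_smoothFloor {a b : ℝ} (hab : a < b) (t : ℝ) :
    t - (b - a) ≤ smoothFloor a b t := by
  rcases le_total t b with ht | ht
  · linarith [le_smoothFloor hab t]
  · linarith [smoothFloor_of_le hab ht]

theorem exists_mul_le_smoothFloor {a b c : ℝ} (hc : 0 < c) (ha : 0 < a) (hab : a < b) (K : ℝ) :
    ∃ c₁ > 0, ∀ m t, c * m - K ≤ t → c₁ * m ≤ smoothFloor a b t := by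
  have hgap : 0 ≤ |K| + (b - a) := add_nonneg (abs_nonneg K) (sub_pos.2 hab).le
  have hden : 0 < 1 + (|K| + (b - a)) / a :=
    add_pos_of_pos_of_nonneg one_pos (div_nonneg hgap ha.le)
  refine ⟨c / (1 + (|K| + (b - a)) / a), div_pos hc hden, fun m t ht => ?_⟩
  set P := smoothFloor a b t
  have hP : 1 ≤ P / a := (one_le_div ha).2 (le_smoothFloor hab t)
  rw [div_mul_eq_mul_div, div_le_iff₀ hden]
  calc c * m ≤ P + (|K| + (b - a)) * 1 := by
        linarith [sub_le_smoothFloor hab t, le_abs_self K]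
    _ ≤ P + (|K| + (b - a)) * (P / a) := by gcongr
    _ = P * (1 + (|K| + (b - a)) / a) := by ring

theorem UniformSymbol.smoothFloor_comp {ι E : Type*} [NormedAddCommGroup E] [NormedSpace ℝ E]
    {w p : ι → E → ℝ} {a b c K : ℝ} (hp : UniformSymbol w p) (hw : ∀ i x, 1 ≤ w i x) (hc : 0 < c)
    (hpK : ∀ i x, c * w i x - K ≤ p i x) (hab : a < b) :
    UniformSymbol w fun i x => smoothFloor a b (p i x) := by
  have hcorr : ContDiff ℝ ∞ fun t => smoothFloor a b t - t :=
    (contDiff_smoothFloor a b).sub contDiff_id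
  have hsupp : tsupport (fun t => smoothFloor a b t - t) ⊆ Set.Iic b :=
    closure_minimal (fun t ht => not_lt.1 fun hbt =>
      ht (sub_eq_zero.2 (smoothFloor_of_le hab hbt.le))) isClosed_Iic
  have hcorr_p := hp.comp_left hcorr (isCompact_Icc (a := -K) (b := b)) (W := (b + K) / c)
    fun i x hx => by
      have hpb : p i x ≤ b := hsupp hx
      have hcw : 0 < c * w i x := mul_pos hc (one_pos.trans_le (hw i x))
      refine ⟨⟨by linarith [hpK i x], hpb⟩, ?_⟩
      rw [Real.norm_of_nonneg (zero_le_one.trans (hw i x)), le_div_iff₀' hc]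
      linarith [hpK i x]
  simpa only [add_sub_cancel] using
    hp.add (hcorr_p.mono (.of_norm_le fun q => by simpa using hw q.1 q.2))

theorem UniformSymbol.exists_extension {ι E : Type*} [NormedAddCommGroup E] [NormedSpace ℝ E]
    {w p : ι → E → ℝ} {c K δ γ : ℝ} (hp : UniformSymbol w p) (hw : ∀ i x, 1 ≤ w i x) (hc : 0 < c)
    (hpK : ∀ i x, c * w i x - K ≤ p i x) (hδ : 0 < δ) (hδγ : δ < γ) :
    ∃ P, UniformSymbol w P ∧ (∀ i x, γ ≤ p i x → P i x = p i x) ∧ (∀ i x, δ < P i x) ∧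
      ∃ c₁ > 0, ∀ i x, c₁ * w i x ≤ P i x := by
  obtain ⟨a, hδa, haγ⟩ := exists_between hδγ
  obtain ⟨c₁, hc₁, hP⟩ := exists_mul_le_smoothFloor hc (hδ.trans hδa) haγ K
  exact ⟨fun i x => smoothFloor a γ (p i x), hp.smoothFloor_comp hw hc hpK haγ,
    fun i x => smoothFloor_of_le haγ, fun i x => hδa.trans_le (le_smoothFloor haγ _),
    c₁, hc₁, fun i x => hP _ _ (hpK i x)⟩

/-- The dilation `(x, ξ) ↦ (r x, ξ)` of phase space, which leaves the momentum fixed. -/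
def positionDilation (r : ℝˣ) : (R2 × R2) ≃L[ℝ] R2 × R2 :=
  (ContinuousLinearEquiv.smulLeft r).prodCongr (.refl ℝ R2)

theorem positionDilation_apply (r : ℝˣ) (z : R2 × R2) :
    positionDilation r z = ((r : ℝ) • z.1, z.2) := rfl

theorem positionDilation_eX (r : ℝˣ) (j : Fin 2) :
    positionDilation r (eX j) = (r : ℝ) • eX j := by
  simp [positionDilation_apply, eX]

theorem positionDilation_eXi (r : ℝˣ) (j : Fin 2) :
    positionDilation r (eXi j) = (1 : ℝ) • eXi j := by
  simp [positionDilation_apply, eXi]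

theorem iterate_pdir_smul_comp {L : (R2 × R2) ≃L[ℝ] R2 × R2} {v : R2 × R2} {c : ℝ}
    (hL : L v = c • v) (k : ℕ) (a : ℝ) (f : R2 × R2 → ℝ) :
    (pdir v)^[k] (a • (f ∘ L)) = (a * c ^ k) • ((pdir v)^[k] f ∘ L) := by
  induction k with
  | zero => simp
  | succ k ih =>
    ext z
    simp only [Function.iterate_succ_apply', ih, pdir, fderiv_const_smul_field,
      Pi.smul_apply, smul_apply, L.comp_right_fderiv, Function.comp_apply,
      ContinuousLinearMap.comp_apply, ContinuousLinearEquiv.coe_coe, hL, map_smul, smul_eq_mul]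
    ring

theorem mixedPartial_comp_positionDilation (α β : Fin 2 → ℕ) (f : R2 × R2 → ℝ) (r : ℝˣ) :
    mixedPartial α β (f ∘ positionDilation r) =
      (r : ℝ) ^ (∑ i, β i) • (mixedPartial α β f ∘ positionDilation r) := by
  rw [← one_smul ℝ (f ∘ positionDilation r)]
  simp only [mixedPartial, iterate_pdir_smul_comp (positionDilation_eXi r _),
    iterate_pdir_smul_comp (positionDilation_eX r _), one_pow, one_mul, Fin.sum_univ_two]
  rw [← pow_add, add_comm]

protected theorem UniformSymbol.mixedPartial {ι : Type*} {w : ι → R2 × R2 → ℝ} {f : ι → R2 × R2 → ℝ}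
    (hf : UniformSymbol w f) (α β : Fin 2 → ℕ) :
    UniformSymbol w fun i => mixedPartial α β (f i) := by
  have hiter (v : R2 × R2) (k : ℕ) {g : ι → R2 × R2 → ℝ} (hg : UniformSymbol w g) :
      UniformSymbol w fun i => (pdir v)^[k] (g i) := by
    induction k with
    | zero => exact hg
    | succ k ih =>
      simp only [Function.iterate_succ_apply']
      exact ih.fderiv.clm_comp (ContinuousLinearMap.apply ℝ ℝ v)
  exact hiter _ _ (hiter _ _ (hiter _ _ (hiter _ _ hf)))

theorem UniformSymbol.exists_abs_mixedPartial_comp_positionDilation_le {ι : Type*}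
    {w : ι → R2 × R2 → ℝ} {f : ι → R2 × R2 → ℝ} (hf : UniformSymbol w f) (hw : ∀ i z, 0 ≤ w i z)
    (α β : Fin 2 → ℕ) :
    ∃ C > 0, ∀ i (r : ℝˣ) z, |mixedPartial α β (f i ∘ positionDilation r) z| ≤
      C * |(r : ℝ)| ^ (∑ i, β i) * w i (positionDilation r z) := by
  obtain ⟨C, hC, hfC⟩ := (hf.mixedPartial α β).exists_norm_apply_le hw
  refine ⟨C, hC, fun i r z => ?_⟩
  rw [mixedPartial_comp_positionDilation, Pi.smul_apply, smul_eq_mul, abs_mul, abs_pow,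
    mul_comm C, mul_assoc]
  gcongr
  exact hfC i _

section

variable {ι E F : Type*} [NormedAddCommGroup E] [NormedSpace ℝ E] [NormedAddCommGroup F]
  [NormedSpace ℝ F]

theorem UniformSymbol.smul_sub {g : E → F} (hg : Differentiable ℝ g)
    (hg' : UniformSymbol (fun (_ : ι) _ => 1) fun _ => fderiv ℝ g) {s : ι → ℝ}
    (hs : s =O[⊤] fun _ => (1 : ℝ)) (a : ι → E) :
    UniformSymbol (fun i y => 1 + ‖s i • y‖) fun i y => s i • (g (y + a i) - g (a i)) := by
  refine of_fderiv (fun i => by fun_prop) ?_ ?_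
  · obtain ⟨C, hC₀, hC⟩ := hg'.isBigO_apply.exists_nonneg
    simp only [isBigOWith_top, norm_one, mul_one] at hC
    refine isBigO_top.2 ⟨C, fun ⟨i, y⟩ => ?_⟩
    have hlip : ‖g (y + a i) - g (a i)‖ ≤ C * ‖y‖ := by
      simpa only [add_sub_cancel_right] using convex_univ.norm_image_sub_le_of_norm_fderiv_le
        (fun x _ => hg x) (fun x _ => hC (i, x)) (Set.mem_univ (a i)) (Set.mem_univ (y + a i))
    calc ‖s i • (g (y + a i) - g (a i))‖ ≤ ‖s i‖ * (C * ‖y‖) := by rw [norm_smul]; gcongr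
      _ = C * ‖s i • y‖ := by rw [norm_smul]; ring
      _ ≤ C * ‖1 + ‖s i • y‖‖ := by
          gcongr
          exact (lt_one_add _).le.trans (le_abs_self _)
  · have hderiv (i : ι) : fderiv ℝ (fun y => s i • (g (y + a i) - g (a i))) =
        fun y => s i • fderiv ℝ g (y + a i) := by
      ext1 y
      rw [fderiv_fun_const_smul (by fun_prop), fderiv_sub_const, fderiv_comp_add_right]
    simp only [hderiv]
    exact ((const hs).bilinear (.lsmul ℝ ℝ) (hg'.comp_add_right a)).mono <|
      .of_norm_le fun p => by simp

/-- The increment of `g` at `a`, rescaled by `s` and cut off at distance of order `s⁻¹`. -/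
def truncatedIncrement (χ : E → ℝ) (g : E → F) (s : ℝ) (a y : E) : F :=
  χ (s • y) • s • (g (y + a) - g a)

theorem uniformSymbol_truncatedIncrement {χ : E → ℝ} (hχ : ContDiff ℝ ∞ χ)
    (hχ_supp : HasCompactSupport χ) {g : E → F} (hg : Differentiable ℝ g)
    (hg' : UniformSymbol (fun (_ : ι) _ => 1) fun _ => fderiv ℝ g) {s : ι → ℝ}
    (hs : s =O[⊤] fun _ => (1 : ℝ)) (a : ι → E) :
    UniformSymbol (fun _ _ => 1) fun i => truncatedIncrement χ g (s i) (a i) := by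
  have hdil : (fun i => s i • ContinuousLinearMap.id ℝ E) =O[⊤] fun _ => (1 : ℝ) := by
    simpa using hs.smul (isBigO_const_one ℝ (ContinuousLinearMap.id ℝ E) ⊤)
  have hcut : UniformSymbol (fun (_ : ι) x => (1 + ‖x‖)⁻¹) fun _ => χ :=
    .of_hasCompactSupport hχ hχ_supp ((continuous_const.add continuous_norm).inv₀ fun x =>
      (add_pos_of_pos_of_nonneg one_pos (norm_nonneg x)).ne') fun x => by positivity
  refine ((hcut.comp_clm hdil).bilinear (.lsmul ℝ ℝ) (.smul_sub hg hg' hs a)).mono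
    (.of_norm_le fun ⟨i, y⟩ => ?_)
  have hweight : (1 + ‖s i • y‖)⁻¹ * (1 + ‖s i • y‖) = 1 := inv_mul_cancel₀ (by positivity)
  simpa [abs_of_pos (add_pos_of_pos_of_nonneg one_pos (norm_nonneg (s i • y)))] using hweight.le

end

/-- The symbol `|ξ - A(x)|² / 4 + V(x)` of the magnetic Schrödinger operator with vector potential
`A` and electric potential `V`. -/
def magneticSymbol {E : Type*} [NormedAddCommGroup E] (A : E → E) (V : E → ℝ) (z : E × E) :
    ℝ :=
  ‖z.2 - A z.1‖ ^ 2 / 4 + V z.1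

theorem le_magneticSymbol {E : Type*} [NormedAddCommGroup E] (A : E → E) (V : E → ℝ)
    (z : E × E) :
    ‖z.2‖ ^ 2 / 8 - ‖A z.1‖ ^ 2 / 4 + V z.1 ≤ magneticSymbol A V z := by
  have htri : ‖z.2‖ ≤ ‖z.2 - A z.1‖ + ‖A z.1‖ := norm_le_norm_sub_add _ _
  have hsq : ‖z.2‖ ^ 2 ≤ 2 * (‖z.2 - A z.1‖ ^ 2 + ‖A z.1‖ ^ 2) :=
    (pow_le_pow_left₀ (norm_nonneg _) htri 2).trans add_sq_le
  rw [magneticSymbol]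
  linarith

section

variable {ι E : Type*} [NormedAddCommGroup E] [InnerProductSpace ℝ E]

theorem exists_le_magneticSymbol {A : ι → E → E} {V : ι → E → ℝ}
    (hA : UniformSymbol (fun _ _ => 1) A) (hV : UniformSymbol (fun _ _ => 1) V) :
    ∃ K, ∀ i z, 1 / 8 * (1 + ‖z.2‖ ^ 2) - K ≤ magneticSymbol (A i) (V i) z := by
  obtain ⟨C, hC⟩ := isBigO_top.1 hA.isBigO_apply
  obtain ⟨D, hD⟩ := isBigO_top.1 hV.isBigO_apply
  simp only [norm_one, mul_one] at hC hD
  refine ⟨1 / 8 + C ^ 2 / 4 + D, fun i z => ?_⟩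
  have hA_sq : ‖A i z.1‖ ^ 2 ≤ C ^ 2 := pow_le_pow_left₀ (norm_nonneg _) (hC (i, z.1)) 2
  linarith [le_magneticSymbol (A i) (V i) z, neg_le_of_abs_le (hD (i, z.1))]

theorem uniformSymbol_magneticSymbol {A : ι → E → E} {V : ι → E → ℝ}
    (hA : UniformSymbol (fun _ _ => 1) A) (hV : UniformSymbol (fun _ _ => 1) V) :
    UniformSymbol (fun _ z => 1 + ‖z.2‖ ^ 2) fun i => magneticSymbol (A i) (V i) := by
  have hfst : (fun _ : ι => ContinuousLinearMap.fst ℝ E E) =O[⊤] fun _ => (1 : ℝ) :=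
    isBigO_const_one ℝ _ ⊤
  have hmom : UniformSymbol (fun _ z => 1 + ‖z.2‖) fun i (z : E × E) => z.2 + -A i z.1 :=
    (UniformSymbol.clm (ContinuousLinearMap.snd ℝ E E)).add <|
      ((hA.comp_clm hfst).clm_comp (-.id ℝ E)).mono <| .of_norm_le fun p => by simp
  have hkin : UniformSymbol (fun _ z => 1 + ‖z.2‖ ^ 2)
      fun i (z : E × E) => (1 / 4 : ℝ) • inner ℝ (z.2 + -A i z.1) (z.2 + -A i z.1) :=
    ((hmom.bilinear (innerSL ℝ) hmom).clm_comp ((1 / 4 : ℝ) • .id ℝ ℝ)).mono <|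
      isBigO_top.2 ⟨2, fun p => by
        rw [Real.norm_of_nonneg (by positivity), Real.norm_of_nonneg (by positivity)]
        nlinarith [sq_nonneg (1 - ‖p.2.2‖)]⟩
  convert! hkin.add ((hV.comp_clm hfst).mono <| .of_norm_le fun p => ?_) using 3 with i z
  · rw [magneticSymbol, real_inner_self_eq_norm_sq, ← sub_eq_add_neg, smul_eq_mul,
      one_div_mul_eq_div]
    rfl
  · simp

end

/-- The linear map taking the differential of `φ` to the rotated gradient `(∂₂φ, -∂₁φ)`, which is a
vector potential of the magnetic field `-Δφ`. -/
def skewGradient : (R2 →L[ℝ] ℝ) →L[ℝ] R2 :=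
  (EuclideanSpace.equiv (Fin 2) ℝ).symm.toContinuousLinearMap ∘L
    .pi ![.apply ℝ ℝ (.single 1 1), -.apply ℝ ℝ (.single 0 1)]

theorem skewGradient_fderiv_zero (φ : R2 → ℝ) (x : R2) :
    skewGradient (fderiv ℝ φ x) 0 = pdR 1 φ x := by
  simp [skewGradient, pdR]

theorem skewGradient_fderiv_one (φ : R2 → ℝ) (x : R2) :
    skewGradient (fderiv ℝ φ x) 1 = -pdR 0 φ x := by
  simp [skewGradient, pdR]

/-- The symbol `p̃_q` in the rescaled position variable `y = x / s`, where `h = s²` and `q = s a`,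
with the vector potential cut off by `χ` in the original variable `x`. -/
def rescaledSymP (χ φ : R2 → ℝ) (s : ℝ) (a : R2) : R2 × R2 → ℝ :=
  magneticSymbol (truncatedIncrement χ (fun y => skewGradient (fderiv ℝ φ y)) s a)
    fun y => -(s ^ 2 / 4 * lapR φ y + 1)

section

variable {ι : Type*} {φ : R2 → ℝ}

theorem uniformSymbol_fderiv_fderiv {E F : Type*} [NormedAddCommGroup E] [NormedSpace ℝ E]
    [NormedAddCommGroup F] [NormedSpace ℝ F] {f : E → F} (hf : ContDiff ℝ ∞ f)
    (hf_bd : ∀ n, 2 ≤ n → ∃ C, ∀ x, ‖iteratedFDeriv ℝ n f x‖ ≤ C) :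
    UniformSymbol (fun (_ : ι) _ => 1) fun _ => fderiv ℝ (fderiv ℝ f) where
  contDiff _ := (contDiff_infty_iff_fderiv.1 (contDiff_infty_iff_fderiv.1 hf).2).2
  isBigO n := by
    obtain ⟨C, hC⟩ := hf_bd (n + 2) (by lia)
    refine isBigO_top.2 ⟨C, fun p => ?_⟩
    simpa only [norm_iteratedFDeriv_fderiv, norm_one, mul_one] using hC p.2

theorem uniformSymbol_lapR (hφ : Differentiable ℝ (fderiv ℝ φ))
    (hφ' : UniformSymbol (fun (_ : ι) _ => 1) fun _ => fderiv ℝ (fderiv ℝ φ)) :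
    UniformSymbol (fun (_ : ι) _ => 1) fun _ => lapR φ := by
  have hpdR (j : Fin 2) : UniformSymbol (fun (_ : ι) _ => 1) fun _ => pdR j (pdR j φ) :=
    (UniformSymbol.fderiv_clm_comp (fun _ => hφ) hφ' (.apply ℝ ℝ (.single j 1))).clm_comp
      (.apply ℝ ℝ (.single j 1))
  exact (hpdR 0).add (hpdR 1)

theorem uniformSymbol_potential {s : ι → ℝ} (hs : s =O[⊤] fun _ => (1 : ℝ))
    (hφ : Differentiable ℝ (fderiv ℝ φ))
    (hφ' : UniformSymbol (fun (_ : ι) _ => 1) fun _ => fderiv ℝ (fderiv ℝ φ)) :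
    UniformSymbol (fun _ _ => 1) fun i y => -(s i ^ 2 / 4 * lapR φ y + 1) := by
  have hs_sq : (fun i => -(s i ^ 2 / 4)) =O[⊤] fun _ => (1 : ℝ) := by
    simpa [neg_div', div_eq_inv_mul] using ((hs.pow 2).const_mul_left (4⁻¹ : ℝ)).neg_left
  have hone : (fun _ : ι => (-1 : ℝ)) =O[⊤] fun _ => (1 : ℝ) := isBigO_const_one ℝ _ ⊤
  have hlap : UniformSymbol (fun _ _ => 1) fun i y => -(s i ^ 2 / 4) * lapR φ y :=
    ((UniformSymbol.const hs_sq).bilinear (.mul ℝ ℝ) (uniformSymbol_lapR hφ hφ')).mono <|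
      .of_norm_le fun _ => by simp
  simpa only [neg_mul, ← neg_add] using hlap.add (.const hone)

theorem uniformSymbol_truncatedIncrement_skewGradient {χ : R2 → ℝ} (hχ : ContDiff ℝ ∞ χ)
    (hχ_supp : HasCompactSupport χ) {s : ι → ℝ} (hs : s =O[⊤] fun _ => (1 : ℝ))
    (hφ : Differentiable ℝ (fderiv ℝ φ))
    (hφ' : UniformSymbol (fun (_ : ι) _ => 1) fun _ => fderiv ℝ (fderiv ℝ φ)) (a : ι → R2) :
    UniformSymbol (fun _ _ => 1) fun i =>
      truncatedIncrement χ (fun y => skewGradient (fderiv ℝ φ y)) (s i) (a i) :=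
  uniformSymbol_truncatedIncrement hχ hχ_supp (skewGradient.differentiable.comp hφ)
    (.fderiv_clm_comp (fun _ => hφ) hφ' skewGradient) hs a

theorem uniformSymbol_rescaledSymP {χ : R2 → ℝ} (hχ : ContDiff ℝ ∞ χ)
    (hχ_supp : HasCompactSupport χ) {s : ι → ℝ} (hs : s =O[⊤] fun _ => (1 : ℝ))
    (hφ : Differentiable ℝ (fderiv ℝ φ))
    (hφ' : UniformSymbol (fun (_ : ι) _ => 1) fun _ => fderiv ℝ (fderiv ℝ φ)) (a : ι → R2) :
    UniformSymbol (fun _ z => 1 + ‖z.2‖ ^ 2) fun i => rescaledSymP χ φ (s i) (a i) :=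
  uniformSymbol_magneticSymbol
    (uniformSymbol_truncatedIncrement_skewGradient hχ hχ_supp hs hφ hφ' a)
    (uniformSymbol_potential hs hφ hφ')

theorem exists_le_rescaledSymP {χ : R2 → ℝ} (hχ : ContDiff ℝ ∞ χ)
    (hχ_supp : HasCompactSupport χ) {s : ι → ℝ} (hs : s =O[⊤] fun _ => (1 : ℝ))
    (hφ : Differentiable ℝ (fderiv ℝ φ))
    (hφ' : UniformSymbol (fun (_ : ι) _ => 1) fun _ => fderiv ℝ (fderiv ℝ φ)) (a : ι → R2) :
    ∃ K, ∀ i z, 1 / 8 * (1 + ‖z.2‖ ^ 2) - K ≤ rescaledSymP χ φ (s i) (a i) z :=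
  exists_le_magneticSymbol
    (uniformSymbol_truncatedIncrement_skewGradient hχ hχ_supp hs hφ hφ' a)
    (uniformSymbol_potential hs hφ hφ')

theorem exists_extension_rescaledSymP {χ : R2 → ℝ} (hχ : ContDiff ℝ ∞ χ)
    (hχ_supp : HasCompactSupport χ) {s : ι → ℝ} (hs : s =O[⊤] fun _ => (1 : ℝ))
    (hφ : ContDiff ℝ ∞ φ) (hφ_bd : ∀ n, 2 ≤ n → ∃ C, ∀ x, ‖iteratedFDeriv ℝ n φ x‖ ≤ C)
    (a : ι → R2) {δ γ : ℝ} (hδ : 0 < δ) (hδγ : δ < γ) :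
    ∃ P : ι → R2 × R2 → ℝ, UniformSymbol (fun _ z => 1 + ‖z.2‖ ^ 2) P ∧
      (∀ i z, γ ≤ rescaledSymP χ φ (s i) (a i) z → P i z = rescaledSymP χ φ (s i) (a i) z) ∧
      (∀ i z, δ < P i z) ∧ ∃ c₁ > 0, ∀ i z, c₁ * (1 + ‖z.2‖ ^ 2) ≤ P i z := by
  have hφ' : Differentiable ℝ (fderiv ℝ φ) :=
    (contDiff_infty_iff_fderiv.1 hφ).2.differentiable (by simp)
  have hφ'' := uniformSymbol_fderiv_fderiv (ι := ι) hφ hφ_bd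
  obtain ⟨K, hK⟩ := exists_le_rescaledSymP hχ hχ_supp hs hφ' hφ'' a
  exact (uniformSymbol_rescaledSymP hχ hχ_supp hs hφ' hφ'' a).exists_extension
    (fun _ _ => by simp) (by norm_num) hK hδ hδγ

end

theorem pdR_comp_smul (f : R2 → ℝ) (j : Fin 2) (r : ℝ) (x : R2) :
    pdR j (fun x => f (r • x)) x = r * pdR j f (r • x) := by
  simp [pdR, fderiv_comp_smul]

theorem lapR_comp_smul (f : R2 → ℝ) (r : ℝ) (x : R2) :
    lapR (fun x => f (r • x)) x = r ^ 2 * lapR f (r • x) := by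
  have hpdR (j : Fin 2) : pdR j (pdR j fun x => f (r • x)) x = r ^ 2 * pdR j (pdR j f) (r • x) := by
    have hsmul : pdR j (fun x => f (r • x)) = r • fun x => pdR j f (r • x) :=
      funext (pdR_comp_smul f j r)
    rw [hsmul, pdR, fderiv_const_smul_field, Pi.smul_apply, smul_apply, ← pdR,
      pdR_comp_smul, smul_eq_mul]
    ring
  rw [lapR, hpdR, hpdR, lapR, mul_add]

theorem inv_sqrt_pow {h : ℝ} (hh : 0 ≤ h) (k : ℕ) : (√h)⁻¹ ^ k = h ^ (-((k : ℝ) / 2)) := by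
  rw [Real.sqrt_eq_rpow, ← Real.rpow_neg hh, ← Real.rpow_mul_natCast hh]
  ring_nf

theorem symP_eq_rescaledSymP {χ φ : R2 → ℝ} {h : ℝ} (hh : 0 < h) {z : R2 × R2}
    (hχ : χ z.1 = 1) (q : R2) :
    symP φ h q z = rescaledSymP χ φ √h ((√h)⁻¹ • q) ((√h)⁻¹ • z.1, z.2) := by
  have hphih : phih φ h = fun x => φ ((√h)⁻¹ • x) := by
    ext x
    rw [phih, Real.rpow_neg hh.le, ← Real.sqrt_eq_rpow]
  have hs : 0 < √h := Real.sqrt_pos.2 hh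
  have hh_sq : h = √h ^ 2 := (Real.sq_sqrt hh.le).symm
  generalize √h = s at *
  subst hh_sq
  simp only [symP, symA, symB, hphih, pdR_comp_smul, lapR_comp_smul, rescaledSymP, magneticSymbol,
    truncatedIncrement, smul_inv_smul₀ hs.ne', hχ, one_smul, EuclideanSpace.norm_sq_eq,
    Real.norm_eq_abs, sq_abs, Fin.sum_univ_two, PiLp.sub_apply, PiLp.smul_apply, smul_eq_mul,
    skewGradient_fderiv_zero, skewGradient_fderiv_one, smul_add]
  field_simp
  ring

theorem stmt4_general (φ : R2 → ℝ) (hφ_smooth : ContDiff ℝ ∞ φ)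
    (hφ_bd : ∀ n : ℕ, 2 ≤ n → ∃ C : ℝ, ∀ x : R2, ‖iteratedFDeriv ℝ n φ x‖ ≤ C)
    {C' : ℝ} (hC' : 0 < C') {δ γ : ℝ} (hδ : 0 < δ) (hδγ : δ < γ) :
    ∃ c₁ > (0 : ℝ), ∃ c₂ > (0 : ℝ), ∃ Cc : (Fin 2 → ℕ) → (Fin 2 → ℕ) → ℝ,
      (∀ α β : Fin 2 → ℕ, 0 < Cc α β) ∧
      ∀ h ∈ Set.Ioc (0 : ℝ) 1, ∀ q : R2, ∃ Pt : R2 × R2 → ℝ, ContDiff ℝ ∞ Pt ∧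
        (∀ z : R2 × R2, ‖z.1‖ ≤ C' → γ ≤ symP φ h q z → Pt z = symP φ h q z) ∧
        (∀ z : R2 × R2, c₁ * (1 + ‖z.2‖ ^ 2) ≤ Pt z ∧ Pt z ≤ c₂ * (1 + ‖z.2‖ ^ 2)) ∧
        (∀ α β : Fin 2 → ℕ, ∀ z : R2 × R2,
          |mixedPartial α β Pt z| ≤
            Cc α β * h ^ (-((∑ i, (β i : ℝ)) / 2)) * (1 + ‖z.2‖ ^ 2)) ∧
        (∀ z : R2 × R2, δ < Pt z) := by
  let χ : ContDiffBump (0 : R2) := ⟨C', C' + 1, hC', lt_add_one C'⟩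
  let s (i : Set.Ioc (0 : ℝ) 1 × R2) : ℝ := √i.1
  let a (i : Set.Ioc (0 : ℝ) 1 × R2) : R2 := (s i)⁻¹ • i.2
  have hs : s =O[⊤] fun _ => (1 : ℝ) := .of_norm_le fun i => by
    simpa [s, abs_of_nonneg] using i.1.2.2
  obtain ⟨P, hP, hP_eq, hδP, c₁, hc₁, hc₁P⟩ := exists_extension_rescaledSymP χ.contDiff
    χ.hasCompactSupport hs hφ_smooth hφ_bd a hδ hδγ
  have hw (_ : Set.Ioc (0 : ℝ) 1 × R2) (z : R2 × R2) : 0 ≤ 1 + ‖z.2‖ ^ 2 := by positivity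
  obtain ⟨c₂, hc₂, hc₂P⟩ := hP.exists_norm_apply_le hw
  choose Cc hCc hCcP using hP.exists_abs_mixedPartial_comp_positionDilation_le hw
  refine ⟨c₁, hc₁, c₂, hc₂, Cc, hCc, fun h hh q => ?_⟩
  let i : Set.Ioc (0 : ℝ) 1 × R2 := (⟨h, hh⟩, q)
  let r : ℝˣ := .mk0 (√h)⁻¹ (inv_ne_zero (Real.sqrt_pos.2 hh.1).ne')
  refine ⟨P i ∘ positionDilation r, (hP.contDiff i).comp (positionDilation r).contDiff,
    fun z hz hγ => ?_, fun z =>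
    ⟨hc₁P i (positionDilation r z), (le_abs_self _).trans (hc₂P i (positionDilation r z))⟩,
    fun α β z => ?_, fun z => hδP i _⟩
  · have hsymP : symP φ h q z = rescaledSymP χ φ (s i) (a i) (positionDilation r z) :=
      symP_eq_rescaledSymP hh.1 (χ.one_of_mem_closedBall (mem_closedBall_zero_iff.2 hz)) q
    rw [hsymP] at hγ ⊢
    exact hP_eq i _ hγ
  · have hr : |(r : ℝ)| ^ (∑ j, β j) = h ^ (-((∑ j, (β j : ℝ)) / 2)) := by
      rw [← Nat.cast_sum, ← inv_sqrt_pow hh.1.le]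
      exact congrArg (· ^ _) (abs_of_nonneg (inv_nonneg.2 (Real.sqrt_nonneg h)))
    exact hr ▸ hCcP α β i r z

/-- Elliptic extension lemma: if `p̃_q > γ` on `supp χ` (with `|x| < C'` there, and
`p̃_q > γ/2` on an `ε`-neighborhood), then `p̃_q` extends to a globally elliptic symbol
`P̃ ∈ S_{0,1/2}(⟨ξ⟩²)` with `P̃ > γ/2` everywhere, uniformly in `h` and `q`. -/
theorem stmt4 (φ : R2 → ℝ) (hφ_smooth : ContDiff ℝ (⊤ : ℕ∞) φ)
    (hφ_bd : ∀ n : ℕ, 2 ≤ n → ∃ C : ℝ, ∀ x : R2, ‖iteratedFDeriv ℝ n φ x‖ ≤ C)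
    (C' : ℝ) (hC' : 0 < C') (γ : ℝ) (hγ : γ ∈ Set.Ioo (0 : ℝ) 1) :
    ∃ c₁ > (0 : ℝ), ∃ c₂ > (0 : ℝ), ∃ Cc : (Fin 2 → ℕ) → (Fin 2 → ℕ) → ℝ,
      (∀ α β' : Fin 2 → ℕ, 0 < Cc α β') ∧
      ∀ h ∈ Set.Ioc (0 : ℝ) 1, ∀ q : R2, ∀ χ : R2 × R2 → ℝ,
        (∀ z ∈ tsupport χ, ‖z.1‖ < C') →
        (∀ z ∈ tsupport χ, γ < symP φ h q z) →
        (∃ ε > (0 : ℝ), ∀ z : R2 × R2, (∃ w ∈ tsupport χ, dist z w < ε) →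
          γ / 2 < symP φ h q z) →
        ∃ Pt : R2 × R2 → ℝ, ContDiff ℝ (⊤ : ℕ∞) Pt ∧
          (∀ z ∈ tsupport χ, Pt z = symP φ h q z) ∧
          (∀ z : R2 × R2, c₁ * (1 + ‖z.2‖ ^ 2) ≤ Pt z ∧ Pt z ≤ c₂ * (1 + ‖z.2‖ ^ 2)) ∧
          (∀ α β' : Fin 2 → ℕ, ∀ z : R2 × R2,
            |mixedPartial α β' Pt z| ≤
              Cc α β' * h ^ (-((∑ i, (β' i : ℝ)) / 2)) * (1 + ‖z.2‖ ^ 2)) ∧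
          (∀ z : R2 × R2, γ / 2 < Pt z) := by
  obtain ⟨c₁, hc₁, c₂, hc₂, Cc, hCc, hext⟩ :=
    stmt4_general φ hφ_smooth hφ_bd hC' (half_pos hγ.1) (half_lt_self hγ.1)
  refine ⟨c₁, hc₁, c₂, hc₂, Cc, hCc, fun h hh q χ hχ hγχ _ => ?_⟩
  obtain ⟨Pt, hPt, hPt_eq, hPt'⟩ := hext h hh q
  exact ⟨Pt, hPt, fun z hz => hPt_eq z (hχ z hz).le (hγχ z hz).le, hPt'⟩
end
end

section
/- Let β ∈ C_c^∞(ℝ²) and set β_q(x) := β(x−q) for q ∈ ℝ². There is a constant C > 0, depending only on φ and β, such that for every h ∈ (0,1] and every Schwartz function u : ℝ² → ℂ satisfying Pu = 0: sup_{q ∈ ℝ²} ‖P(β_q u)‖_{L²(ℝ²)} ≤ C h ‖u‖_{L²(ℝ²)}. -/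
noncomputable section

open MeasureTheory Complex

/-!
`A` and `B` are magnetic derivatives `c D_e - V` with `c = h/2`, so they are symmetric and `P`
satisfies the commutator identity
`P(f u) = f P u - i h (∂₁f · A u + ∂₂f · B u) - (h²/4) (Δf) u`.
For `f = β_q` and `P u = 0` the last term is `O(h²)`, and the theorem reduces to bounding
`χ A u` and `χ B u` in `L²` for the cutoffs `χ = ∂_jβ_q`. This is a Caccioppoli estimate: pairing
`(A² + B²) u = (1 + (h²/4) Δφ_h) u` with `χ² u` and moving one derivative across gives
`‖χ A u‖² + ‖χ B u‖² ≤ ∫ (2 (1 + (h²/4) Δφ_h) χ² + h² |∇χ|²) |u|²`.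
Since `Δφ_h = h⁻¹ (Δφ)(h^{-1/2} ·)`, the weight on the right is bounded above uniformly in `h ≤ 1`
and `q`. Every step is local, so only the `L²` norm of `u` over the support of `β_q` enters.
-/

section L2Norm

variable {α β F G : Type*} [MeasurableSpace α] [MeasurableSpace β]
  [NormedAddCommGroup F] [NormedAddCommGroup G]

lemma eLpNorm_two_le_of_integral_norm_sq_le {μ : Measure α} {ν : Measure β} {f : α → F}
    {g : β → G} (hf : MemLp f 2 μ) (hg : MemLp g 2 ν) {K : ℝ} (hK : 0 ≤ K)
    (hfg : ∫ x, ‖f x‖ ^ 2 ∂μ ≤ K * ∫ x, ‖g x‖ ^ 2 ∂ν) :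
    eLpNorm f 2 μ ≤ ENNReal.ofReal √K * eLpNorm g 2 ν := by
  rw [hf.eLpNorm_eq_integral_rpow_norm two_ne_zero ENNReal.ofNat_ne_top,
    hg.eLpNorm_eq_integral_rpow_norm two_ne_zero ENNReal.ofNat_ne_top,
    ← ENNReal.ofReal_mul (Real.sqrt_nonneg K)]
  simp only [ENNReal.toReal_ofNat, Real.rpow_two, ← one_div, ← Real.sqrt_eq_rpow]
  rw [← Real.sqrt_mul hK]
  exact ENNReal.ofReal_le_ofReal (Real.sqrt_le_sqrt hfg)

lemma eLpNorm_fun_smul_le_of_abs_le [NormedSpace ℝ F] {μ : Measure α} {p : ENNReal} {s : Set α}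
    (hs : MeasurableSet s) {f : α → ℝ} (hf_zero : ∀ x ∉ s, f x = 0) {K : ℝ}
    (hfK : ∀ x, |f x| ≤ K) (g : α → F) :
    eLpNorm (fun x => f x • g x) p μ ≤ ENNReal.ofReal K * eLpNorm g p (μ.restrict s) := by
  rw [← eLpNorm_indicator_eq_eLpNorm_restrict hs]
  refine eLpNorm_le_mul_eLpNorm_of_ae_le_mul (ae_of_all _ fun x => ?_) p
  by_cases hx : x ∈ s
  · rw [Set.indicator_of_mem hx, norm_smul, Real.norm_eq_abs]
    gcongr
    exact hfK x
  · simp [Set.indicator_of_notMem hx, hf_zero x hx]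

end L2Norm

lemma integrable_sq_mul_of_hasCompactSupport {X : Type*} [TopologicalSpace X] [MeasurableSpace X]
    [OpensMeasurableSpace X] {μ : Measure X} [IsFiniteMeasureOnCompacts μ] {f g : X → ℝ}
    (hf : Continuous f) (hf_supp : HasCompactSupport f) (hg : Continuous g) :
    Integrable (fun x => f x ^ 2 * g x) μ :=
  ((hf.pow 2).mul hg).integrable_of_hasCompactSupport
    (hf_supp.mono fun x hx hfx => hx (by simp [hfx]))

lemma integrable_inner_of_hasCompactSupport {X F : Type*} [TopologicalSpace X] [MeasurableSpace X]
    [OpensMeasurableSpace X] {μ : Measure X} [IsFiniteMeasureOnCompacts μ] [NormedAddCommGroup F]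
    [InnerProductSpace ℝ F] {f g : X → F} (hf : Continuous f) (hf_supp : HasCompactSupport f)
    (hg : Continuous g) : Integrable (fun x => inner ℝ (f x) (g x)) μ :=
  (hf.inner hg).integrable_of_hasCompactSupport
    (hf_supp.mono fun x hx hfx => hx (by simp [hfx]))

lemma integral_mul_le_mul_setIntegral {X : Type*} [TopologicalSpace X] [MeasurableSpace X]
    [OpensMeasurableSpace X] [T2Space X] {μ : Measure X} [IsFiniteMeasureOnCompacts μ] {s : Set X}
    (hs : IsCompact s) {f g : X → ℝ} (hf : Continuous f) (hf_zero : ∀ x ∉ s, f x = 0) {K : ℝ}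
    (hfK : ∀ x, f x ≤ K) (hg : Continuous g) (hg_nonneg : ∀ x, 0 ≤ g x) :
    ∫ x, f x * g x ∂μ ≤ K * ∫ x in s, g x ∂μ := by
  rw [← integral_const_mul, ← setIntegral_eq_integral_of_forall_compl_eq_zero (s := s)
    fun x hx => by rw [hf_zero x hx, zero_mul]]
  exact setIntegral_mono ((hf.mul hg).continuousOn.integrableOn_compact hs)
    ((continuous_const.mul hg).continuousOn.integrableOn_compact hs)
    fun x => mul_le_mul_of_nonneg_right (hfK x) (hg_nonneg x)

section MagneticDerivative

variable {E : Type*} [NormedAddCommGroup E] [NormedSpace ℝ E]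

/-- The magnetic derivative `c D_e - V` in the direction `e`, where `D_e = -i ∂_e`. Both operators
`A` and `B` are of this form. -/
def magneticDeriv (c : ℝ) (V : E → ℝ) (e : E) (u : E → ℂ) (x : E) : ℂ :=
  c * (-I * fderiv ℝ u x e) - V x * u x

variable {c : ℝ} {V χ f : E → ℝ} {e x : E} {u v w : E → ℂ}

lemma magneticDeriv_eq_smul_sub_smul (c : ℝ) (V : E → ℝ) (e : E) (u : E → ℂ) (x : E) :
    magneticDeriv c V e u x = -c • (I * fderiv ℝ u x e) - V x • u x := by
  rw [magneticDeriv, Complex.real_smul, Complex.real_smul]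
  push_cast
  ring

lemma contDiff_magneticDeriv {n : ℕ∞} (hV : ContDiff ℝ n V) (hu : ContDiff ℝ (n + 1) u) :
    ContDiff ℝ n (magneticDeriv c V e u) := by
  have hdu : ContDiff ℝ n (fderiv ℝ u) := hu.fderiv_right le_rfl
  have hVu : ContDiff ℝ n fun x => V x * u x := hV.smul (hu.of_le le_self_add)
  exact (contDiff_const.mul (contDiff_const.mul (hdu.clm_apply contDiff_const))).sub hVu

lemma continuous_magneticDeriv_magneticDeriv (hV : ContDiff ℝ 1 V) (hu : ContDiff ℝ 2 u) :
    Continuous (magneticDeriv c V e (magneticDeriv c V e u)) :=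
  (contDiff_magneticDeriv (n := 0) (hV.of_le zero_le_one)
    (contDiff_magneticDeriv (n := 1) hV hu)).continuous

lemma hasCompactSupport_magneticDeriv (hu : HasCompactSupport u) :
    HasCompactSupport (magneticDeriv c V e u) :=
  (hu.mono' fun x hx => by
    contrapose! hx
    simp [magneticDeriv, fderiv_of_notMem_tsupport ℝ hx, image_eq_zero_of_notMem_tsupport hx])

lemma magneticDeriv_fun_sub (hu : DifferentiableAt ℝ u x) (hv : DifferentiableAt ℝ v x) :
    magneticDeriv c V e (fun y => u y - v y) x =
      magneticDeriv c V e u x - magneticDeriv c V e v x := by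
  simp only [magneticDeriv, fderiv_fun_sub hu hv, sub_apply]
  ring

lemma magneticDeriv_const_mul (a : ℂ) (hu : DifferentiableAt ℝ u x) :
    magneticDeriv c V e (fun y => a * u y) x = a * magneticDeriv c V e u x := by
  simp only [magneticDeriv, fderiv_const_mul hu, smul_apply, smul_eq_mul]
  ring

lemma magneticDeriv_fun_smul (hf : DifferentiableAt ℝ f x) (hu : DifferentiableAt ℝ u x) :
    magneticDeriv c V e (fun y => f y • u y) x =
      f x • magneticDeriv c V e u x - (c * fderiv ℝ f x e) • (I * u x) := by
  rw [magneticDeriv, magneticDeriv, fderiv_fun_smul hf hu]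
  simp only [add_apply, smul_apply, ContinuousLinearMap.smulRight_apply, Complex.real_smul]
  push_cast
  ring

lemma magneticDeriv_magneticDeriv_fun_smul (hV : ContDiff ℝ 1 V) (hf : ContDiff ℝ 2 f)
    (hu : ContDiff ℝ 2 u) :
    magneticDeriv c V e (magneticDeriv c V e (fun y => f y • u y)) x =
      f x • magneticDeriv c V e (magneticDeriv c V e u) x
        - (2 * c * fderiv ℝ f x e) • (I * magneticDeriv c V e u x)
        - (c ^ 2 * fderiv ℝ (fun y => fderiv ℝ f y e) x e) • u x := by
  have df : Differentiable ℝ f := hf.differentiable two_ne_zero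
  have du : Differentiable ℝ u := hu.differentiable two_ne_zero
  have dTu : Differentiable ℝ (magneticDeriv c V e u) :=
    (contDiff_magneticDeriv (n := 1) hV hu).differentiable one_ne_zero
  have ddf : Differentiable ℝ fun y => fderiv ℝ f y e :=
    ((hf.fderiv_right (m := 1) le_rfl).clm_apply contDiff_const).differentiable one_ne_zero
  have dcdf : Differentiable ℝ fun y => c * fderiv ℝ f y e := ddf.const_mul c
  have dIu : Differentiable ℝ fun y => I * u y := du.const_mul I
  have hTfu : magneticDeriv c V e (fun y => f y • u y) = fun y =>
      f y • magneticDeriv c V e u y - (c * fderiv ℝ f y e) • (I * u y) :=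
    funext fun y => magneticDeriv_fun_smul (df y) (du y)
  rw [hTfu, magneticDeriv_fun_sub ((df x).fun_smul (dTu x)) ((dcdf x).fun_smul (dIu x)),
    magneticDeriv_fun_smul (df x) (dTu x), magneticDeriv_fun_smul (dcdf x) (dIu x),
    magneticDeriv_const_mul I (du x), fderiv_const_mul (ddf x)]
  simp only [Complex.real_smul, smul_apply, smul_eq_mul]
  push_cast
  linear_combination (c ^ 2 * fderiv ℝ (fun y => fderiv ℝ f y e) x e * u x : ℂ) * I_sq

lemma norm_smul_magneticDeriv_sq_le (hχ : DifferentiableAt ℝ χ x) (hu : DifferentiableAt ℝ u x) :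
    ‖χ x • magneticDeriv c V e u x‖ ^ 2 ≤
      2 * inner ℝ (magneticDeriv c V e (fun y => χ y ^ 2 • u y) x) (magneticDeriv c V e u x)
        + 4 * c ^ 2 * (fderiv ℝ χ x e ^ 2 * ‖u x‖ ^ 2) := by
  set T := magneticDeriv c V e u x with hT
  set a := χ x • T with ha
  set b := (c * fderiv ℝ χ x e) • (I * u x) with hb
  have norm_b : ‖b‖ ^ 2 = c ^ 2 * (fderiv ℝ χ x e ^ 2 * ‖u x‖ ^ 2) := by
    simp [hb, mul_pow, mul_assoc]
  have hχu : magneticDeriv c V e (fun y => χ y ^ 2 • u y) x = χ x • (a - (2 : ℝ) • b) := by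
    rw [magneticDeriv_fun_smul (hχ.fun_pow 2) hu, ← hT, fderiv_fun_pow 2 hχ, ha, hb]
    simp only [smul_apply, smul_eq_mul]
    module
  -- `a - b` is the magnetic derivative of `χ u`, so this is the IMS localization formula.
  have inner_eq : inner ℝ (magneticDeriv c V e (fun y => χ y ^ 2 • u y) x) T =
      ‖a - b‖ ^ 2 - ‖b‖ ^ 2 := by
    rw [hχu, real_inner_smul_left, ← real_inner_smul_right, ← ha, inner_sub_left,
      real_inner_smul_left b a, real_inner_self_eq_norm_sq, norm_sub_sq_real, real_inner_comm]
    ring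
  have norm_a : ‖a‖ ^ 2 ≤ 2 * (‖a - b‖ ^ 2 + ‖b‖ ^ 2) := by
    have := parallelogram_law_with_norm ℝ (a - b) b
    rw [sub_add_cancel] at this
    nlinarith [mul_self_nonneg ‖a - b - b‖]
  linarith

lemma integrable_sq_mul_inner_magneticDeriv_magneticDeriv_add [MeasurableSpace E]
    [OpensMeasurableSpace E] {μ : Measure E} [IsFiniteMeasureOnCompacts μ] (hV : ContDiff ℝ 1 V)
    (hχ : ContDiff ℝ 1 χ) (hχ_supp : HasCompactSupport χ) (hu : ContDiff ℝ 2 u) :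
    Integrable (fun x =>
      2 * (χ x ^ 2 * inner ℝ (u x) (magneticDeriv c V e (magneticDeriv c V e u) x))
        + 4 * c ^ 2 * (fderiv ℝ χ x e ^ 2 * ‖u x‖ ^ 2)) μ := by
  have hTTu := continuous_magneticDeriv_magneticDeriv (c := c) (e := e) hV hu
  have hdχ : Continuous fun x => fderiv ℝ χ x e := by fun_prop
  exact ((integrable_sq_mul_of_hasCompactSupport hχ.continuous hχ_supp
      (hu.continuous.inner hTTu)).const_mul 2).add
    ((integrable_sq_mul_of_hasCompactSupport hdχ (hχ_supp.fderiv_apply (𝕜 := ℝ) e)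
      (hu.continuous.norm.pow 2)).const_mul (4 * c ^ 2))

variable [FiniteDimensional ℝ E] [MeasurableSpace E] [BorelSpace E] {μ : Measure E}
  [μ.IsAddHaarMeasure]

lemma integral_inner_magneticDeriv_comm (hV : Continuous V) (hv : ContDiff ℝ 1 v)
    (hv_supp : HasCompactSupport v) (hw : ContDiff ℝ 1 w) :
    ∫ x, inner ℝ (magneticDeriv c V e v x) (w x) ∂μ =
      ∫ x, inner ℝ (v x) (magneticDeriv c V e w x) ∂μ := by
  have inner_I_mul_left (z w : ℂ) : inner ℝ (I * z) w = -inner ℝ z (I * w) := by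
    simp [Complex.inner, neg_add_eq_sub]
  have dv : Differentiable ℝ v := hv.differentiable one_ne_zero
  have hIv : ContDiff ℝ 1 fun x => I * v x := contDiff_const.mul hv
  have hIv_supp : HasCompactSupport fun x => I * v x := hv_supp.mul_left
  have hIdv : Continuous fun x => fderiv ℝ (fun y => I * v y) x e := by fun_prop
  have hdw : Continuous fun x => fderiv ℝ w x e := by fun_prop
  have hVvw : Integrable (fun x => V x * inner ℝ (v x) (w x)) μ := by
    simpa only [real_inner_smul_right] using
      integrable_inner_of_hasCompactSupport (μ := μ) hv.continuous hv_supp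
        (hV.fun_smul hw.continuous)
  have hIdvw : Integrable (fun x => inner ℝ (fderiv ℝ (fun y => I * v y) x e) (w x)) μ :=
    integrable_inner_of_hasCompactSupport hIdv (hIv_supp.fderiv_apply (𝕜 := ℝ) e) hw.continuous
  have hIvdw : Integrable (fun x => inner ℝ (I * v x) (fderiv ℝ w x e)) μ :=
    integrable_inner_of_hasCompactSupport hIv.continuous hIv_supp hdw
  have by_parts : ∫ x, inner ℝ (I * v x) (fderiv ℝ w x e) ∂μ =
      -∫ x, inner ℝ (fderiv ℝ (fun y => I * v y) x e) (w x) ∂μ :=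
    integral_bilinear_fderiv_right_eq_neg_left_of_integrable (B := innerSL ℝ)
      hIdvw hIvdw (integrable_inner_of_hasCompactSupport hIv.continuous hIv_supp hw.continuous)
      (fun x _ => hIv.differentiable one_ne_zero x) (fun x _ => hw.differentiable one_ne_zero x)
  calc ∫ x, inner ℝ (magneticDeriv c V e v x) (w x) ∂μ
      = ∫ x, -c * inner ℝ (fderiv ℝ (fun y => I * v y) x e) (w x)
          - V x * inner ℝ (v x) (w x) ∂μ := by
        congr 1 with x
        rw [magneticDeriv_eq_smul_sub_smul, inner_sub_left, real_inner_smul_left,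
          real_inner_smul_left, fderiv_const_mul (dv x), smul_apply, smul_eq_mul]
    _ = ∫ x, c * inner ℝ (I * v x) (fderiv ℝ w x e) - V x * inner ℝ (v x) (w x) ∂μ := by
        rw [integral_sub (hIdvw.const_mul _) hVvw, integral_sub (hIvdw.const_mul _) hVvw,
          integral_const_mul, integral_const_mul, by_parts, neg_mul_comm]
    _ = ∫ x, inner ℝ (v x) (magneticDeriv c V e w x) ∂μ := by
        congr 1 with x
        rw [magneticDeriv_eq_smul_sub_smul, inner_sub_right, real_inner_smul_right,
          real_inner_smul_right, inner_I_mul_left, neg_mul_comm]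

lemma integral_norm_smul_magneticDeriv_sq_le (hV : ContDiff ℝ 1 V) (hχ : ContDiff ℝ 1 χ)
    (hχ_supp : HasCompactSupport χ) (hu : ContDiff ℝ 2 u) :
    ∫ x, ‖χ x • magneticDeriv c V e u x‖ ^ 2 ∂μ ≤
      ∫ x, 2 * (χ x ^ 2 * inner ℝ (u x) (magneticDeriv c V e (magneticDeriv c V e u) x))
        + 4 * c ^ 2 * (fderiv ℝ χ x e ^ 2 * ‖u x‖ ^ 2) ∂μ := by
  set T := magneticDeriv c V e
  have hTu : ContDiff ℝ 1 (T u) := contDiff_magneticDeriv (n := 1) hV hu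
  have hχu : ContDiff ℝ 1 fun x => χ x ^ 2 • u x := (hχ.pow 2).smul (hu.of_le one_le_two)
  have hχu_supp : HasCompactSupport fun x => χ x ^ 2 • u x :=
    hχ_supp.mono fun x hx hχx => hx (by simp [hχx])
  have hTχu : Continuous (T fun x => χ x ^ 2 • u x) :=
    (contDiff_magneticDeriv (n := 0) (hV.of_le zero_le_one) hχu).continuous
  have hdχ : Continuous fun x => fderiv ℝ χ x e := by fun_prop
  have integrable_lhs : Integrable (fun x => ‖χ x • T u x‖ ^ 2) μ :=
    ((hχ.continuous.fun_smul hTu.continuous).norm.pow 2).integrable_of_hasCompactSupport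
      (hχ_supp.mono fun x hx hχx => hx (by simp [hχx]))
  have integrable_TT : Integrable (fun x => 2 * inner ℝ (χ x ^ 2 • u x) (T (T u) x)) μ :=
    (integrable_inner_of_hasCompactSupport hχu.continuous hχu_supp
      (continuous_magneticDeriv_magneticDeriv hV hu)).const_mul 2
  have integrable_T : Integrable (fun x => 2 * inner ℝ (T (fun y => χ y ^ 2 • u y) x) (T u x)) μ :=
    (integrable_inner_of_hasCompactSupport hTχu (hasCompactSupport_magneticDeriv hχu_supp)
      hTu.continuous).const_mul 2
  have integrable_dχ : Integrable (fun x => 4 * c ^ 2 * (fderiv ℝ χ x e ^ 2 * ‖u x‖ ^ 2)) μ :=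
    (integrable_sq_mul_of_hasCompactSupport hdχ (hχ_supp.fderiv_apply (𝕜 := ℝ) e)
      (hu.continuous.norm.pow 2)).const_mul _
  calc ∫ x, ‖χ x • T u x‖ ^ 2 ∂μ
      ≤ ∫ x, 2 * inner ℝ (T (fun y => χ y ^ 2 • u y) x) (T u x)
          + 4 * c ^ 2 * (fderiv ℝ χ x e ^ 2 * ‖u x‖ ^ 2) ∂μ :=
        integral_mono integrable_lhs (integrable_T.add integrable_dχ) fun x =>
          norm_smul_magneticDeriv_sq_le (hχ.differentiable one_ne_zero x)
            (hu.differentiable two_ne_zero x)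
    _ = ∫ x, 2 * inner ℝ (χ x ^ 2 • u x) (T (T u) x)
          + 4 * c ^ 2 * (fderiv ℝ χ x e ^ 2 * ‖u x‖ ^ 2) ∂μ := by
        rw [integral_add integrable_T integrable_dχ, integral_add integrable_TT integrable_dχ,
          integral_const_mul 2, integral_const_mul 2,
          integral_inner_magneticDeriv_comm hV.continuous hχu hχu_supp hTu]
    _ = _ := by simp only [real_inner_smul_left]

end MagneticDerivative

section Potential

lemma pdR_phih (φ : R2 → ℝ) (h : ℝ) (j : Fin 2) :
    pdR j (phih φ h) = h ^ (-(1 / 2) : ℝ) • phih (pdR j φ) h := by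
  ext x
  change fderiv ℝ (fun y => φ (h ^ (-(1 / 2) : ℝ) • y)) x _ = _
  rw [fderiv_comp_smul]
  rfl

lemma pdR_const_smul (a : ℝ) (f : R2 → ℝ) (j : Fin 2) : pdR j (a • f) = a • pdR j f := by
  ext x
  simp [pdR, fderiv_const_smul_field]

lemma lapR_phih (φ : R2 → ℝ) {h : ℝ} (hh : 0 < h) : lapR (phih φ h) = h⁻¹ • phih (lapR φ) h := by
  have hsq : h ^ (-(1 / 2) : ℝ) * h ^ (-(1 / 2) : ℝ) = h⁻¹ := by
    rw [← Real.rpow_add hh, ← Real.rpow_neg_one]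
    norm_num
  ext x
  simp only [lapR, pdR_phih, pdR_const_smul, Pi.smul_apply, smul_eq_mul, phih, ← hsq]
  ring

lemma contDiff_pdR {n : ℕ∞} {f : R2 → ℝ} (hf : ContDiff ℝ (n + 1) f) (j : Fin 2) :
    ContDiff ℝ n (pdR j f) :=
  (hf.fderiv_right le_rfl).clm_apply contDiff_const

lemma contDiff_phih {n : ℕ∞} {φ : R2 → ℝ} (hφ : ContDiff ℝ n φ) (h : ℝ) :
    ContDiff ℝ n (phih φ h) :=
  hφ.comp (contDiff_const_smul _)

lemma pdR_pdR_eq_fderiv_fderiv {f : R2 → ℝ} (hf : ContDiff ℝ 2 f) (i j : Fin 2) (x : R2) :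
    pdR i (pdR j f) x =
      fderiv ℝ (fderiv ℝ f) x (EuclideanSpace.single i 1) (EuclideanSpace.single j 1) := by
  have hdf : Differentiable ℝ (fderiv ℝ f) :=
    (hf.fderiv_right (m := 1) le_rfl).differentiable one_ne_zero
  unfold pdR
  simp [fderiv_clm_apply (hdf x) (differentiableAt_const _)]

lemma abs_pdR_le (f : R2 → ℝ) (j : Fin 2) (x : R2) : |pdR j f x| ≤ ‖fderiv ℝ f x‖ := by
  simpa [pdR] using (fderiv ℝ f x).le_opNorm (EuclideanSpace.single j 1)

lemma abs_pdR_pdR_le {f : R2 → ℝ} (hf : ContDiff ℝ 2 f) (i j : Fin 2) (x : R2) :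
    |pdR i (pdR j f) x| ≤ ‖iteratedFDeriv ℝ 2 f x‖ := by
  rw [pdR_pdR_eq_fderiv_fderiv hf, ← norm_iteratedFDeriv_fderiv, norm_iteratedFDeriv_one]
  simpa using (fderiv ℝ (fderiv ℝ f) x).le_opNorm₂ (EuclideanSpace.single i 1)
    (EuclideanSpace.single j 1)

lemma continuous_lapR {f : R2 → ℝ} (hf : ContDiff ℝ 2 f) : Continuous (lapR f) := by
  have continuous_pdR_pdR (j : Fin 2) : Continuous (pdR j (pdR j f)) :=
    (contDiff_pdR (n := 0) (contDiff_pdR (n := 1) hf j) j).continuous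
  exact (continuous_pdR_pdR 0).add (continuous_pdR_pdR 1)

lemma exists_forall_abs_pdR_le {f : R2 → ℝ} (hf : ContDiff ℝ 1 f) (hf_supp : HasCompactSupport f) :
    ∃ M, ∀ j x, |pdR j f x| ≤ M := by
  obtain ⟨M, hM⟩ := (hf.continuous_fderiv one_ne_zero).bounded_above_of_compact_support
    (hf_supp.fderiv ℝ)
  exact ⟨M, fun j x => (abs_pdR_le f j x).trans (hM x)⟩

lemma exists_forall_abs_pdR_pdR_le {f : R2 → ℝ} (hf : ContDiff ℝ 2 f)
    (hf_supp : HasCompactSupport f) : ∃ N, ∀ i j x, |pdR i (pdR j f) x| ≤ N := by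
  obtain ⟨N, hN⟩ := (hf.continuous_iteratedFDeriv le_rfl).bounded_above_of_compact_support
    (hf_supp.iteratedFDeriv 2)
  exact ⟨N, fun i j x => (abs_pdR_pdR_le hf i j x).trans (hN x)⟩

lemma tsupport_pdR_subset (f : R2 → ℝ) (j : Fin 2) : tsupport (pdR j f) ⊆ tsupport f :=
  tsupport_fderiv_apply_subset ℝ _

lemma pdR_eq_zero_of_notMem_tsupport {f : R2 → ℝ} {x : R2} (hx : x ∉ tsupport f) (j : Fin 2) :
    pdR j f x = 0 :=
  image_eq_zero_of_notMem_tsupport fun hx' => hx (tsupport_pdR_subset f j hx')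

lemma lapR_eq_zero_of_notMem_tsupport {f : R2 → ℝ} {x : R2} (hx : x ∉ tsupport f) :
    lapR f x = 0 := by
  have hx' (j : Fin 2) : x ∉ tsupport (pdR j f) := fun hx' => hx (tsupport_pdR_subset f j hx')
  rw [lapR, pdR_eq_zero_of_notMem_tsupport (hx' 0), pdR_eq_zero_of_notMem_tsupport (hx' 1),
    add_zero]

lemma pdR_comp_sub (f : R2 → ℝ) (j : Fin 2) (q : R2) :
    pdR j (fun x => f (x - q)) = fun x => pdR j f (x - q) := by
  ext x
  simp [pdR, fderiv_comp_sub]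

end Potential

section Operators

variable {φ : R2 → ℝ} {h : ℝ} {u : R2 → ℂ} {f χ : R2 → ℝ}

lemma opBh_eq_magneticDeriv (φ : R2 → ℝ) (h : ℝ) : opBh φ h =
    magneticDeriv (h / 2) (fun x => -(h / 2 * pdR 0 (phih φ h) x)) (EuclideanSpace.single 1 1) := by
  ext u x
  simp [opBh, magneticDeriv, Dop, pdC]

lemma contDiff_half_mul_pdR_phih (hφ : ContDiff ℝ 2 φ) (j : Fin 2) :
    ContDiff ℝ 1 fun x => h / 2 * pdR j (phih φ h) x :=
  contDiff_const.mul (contDiff_pdR (n := 1) (contDiff_phih (n := 2) hφ h) j)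

lemma contDiff_opAh (hφ : ContDiff ℝ 2 φ) (hu : ContDiff ℝ 2 u) : ContDiff ℝ 1 (opAh φ h u) :=
  contDiff_magneticDeriv (n := 1) (contDiff_half_mul_pdR_phih hφ 1) hu

lemma contDiff_opBh (hφ : ContDiff ℝ 2 φ) (hu : ContDiff ℝ 2 u) : ContDiff ℝ 1 (opBh φ h u) := by
  rw [opBh_eq_magneticDeriv]
  exact contDiff_magneticDeriv (n := 1) (contDiff_half_mul_pdR_phih hφ 0).neg hu

lemma opPh_fun_smul (hφ : ContDiff ℝ 2 φ) (hf : ContDiff ℝ 2 f) (hu : ContDiff ℝ 2 u) (x : R2) :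
    opPh φ h (fun y => f y • u y) x =
      f x • opPh φ h u x
        - (h * I) * (pdR 0 f x • opAh φ h u x + pdR 1 f x • opBh φ h u x)
        - (h ^ 2 / 4 * lapR f x) • u x := by
  have hA : opAh φ h (opAh φ h fun y => f y • u y) x = f x • opAh φ h (opAh φ h u) x
      - (2 * (h / 2) * pdR 0 f x) • (I * opAh φ h u x)
      - ((h / 2) ^ 2 * pdR 0 (pdR 0 f) x) • u x :=
    magneticDeriv_magneticDeriv_fun_smul (contDiff_half_mul_pdR_phih hφ 1) hf hu
  have hB : opBh φ h (opBh φ h fun y => f y • u y) x = f x • opBh φ h (opBh φ h u) x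
      - (2 * (h / 2) * pdR 1 f x) • (I * opBh φ h u x)
      - ((h / 2) ^ 2 * pdR 1 (pdR 1 f) x) • u x := by
    rw [opBh_eq_magneticDeriv]
    exact magneticDeriv_magneticDeriv_fun_smul (contDiff_half_mul_pdR_phih hφ 0).neg hf hu
  rw [opPh, opPh, hA, hB]
  simp only [lapR, Complex.real_smul]
  push_cast
  ring

lemma opPh_fun_smul_of_opPh_eq_zero (hφ : ContDiff ℝ 2 φ) (hf : ContDiff ℝ 2 f)
    (hu : ContDiff ℝ 2 u) (hPu : ∀ x, opPh φ h u x = 0) :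
    (opPh φ h fun x => f x • u x) =
      (-(h * I) : ℂ) • ((fun x => pdR 0 f x • opAh φ h u x) + fun x => pdR 1 f x • opBh φ h u x)
        - fun x => (h ^ 2 / 4 * lapR f x) • u x := by
  ext x
  rw [opPh_fun_smul hφ hf hu, hPu x, smul_zero, zero_sub, ← neg_mul]
  rfl

lemma inner_opAh_opAh_add_inner_opBh_opBh {x : R2} (hPu : opPh φ h u x = 0) :
    inner ℝ (u x) (opAh φ h (opAh φ h u) x) + inner ℝ (u x) (opBh φ h (opBh φ h u) x) =
      (1 + h ^ 2 / 4 * lapR (phih φ h) x) * ‖u x‖ ^ 2 := by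
  have hAB : opAh φ h (opAh φ h u) x + opBh φ h (opBh φ h u) x =
      (1 + h ^ 2 / 4 * lapR (phih φ h) x) • u x := by
    rw [opPh] at hPu
    rw [Complex.real_smul]
    push_cast at hPu ⊢
    linear_combination hPu
  rw [← inner_add_right, hAB, real_inner_smul_right, real_inner_self_eq_norm_sq]

lemma integral_norm_smul_opAh_sq_add_opBh_sq_le (hφ : ContDiff ℝ 2 φ) (hχ : ContDiff ℝ 1 χ)
    (hχ_supp : HasCompactSupport χ) (hu : ContDiff ℝ 2 u) (hPu : ∀ x, opPh φ h u x = 0) :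
    (∫ x, ‖χ x • opAh φ h u x‖ ^ 2) + ∫ x, ‖χ x • opBh φ h u x‖ ^ 2 ≤
      ∫ x, (2 * (1 + h ^ 2 / 4 * lapR (phih φ h) x) * χ x ^ 2
        + h ^ 2 * (pdR 0 χ x ^ 2 + pdR 1 χ x ^ 2)) * ‖u x‖ ^ 2 := by
  have hVA := contDiff_half_mul_pdR_phih (h := h) hφ 1
  have hVB := (contDiff_half_mul_pdR_phih (h := h) hφ 0).neg
  let densityA (x : R2) : ℝ := 2 * (χ x ^ 2 * inner ℝ (u x) (opAh φ h (opAh φ h u) x))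
    + 4 * (h / 2) ^ 2 * (pdR 0 χ x ^ 2 * ‖u x‖ ^ 2)
  let densityB (x : R2) : ℝ := 2 * (χ x ^ 2 * inner ℝ (u x) (opBh φ h (opBh φ h u) x))
    + 4 * (h / 2) ^ 2 * (pdR 1 χ x ^ 2 * ‖u x‖ ^ 2)
  have integrable_A : Integrable densityA :=
    integrable_sq_mul_inner_magneticDeriv_magneticDeriv_add hVA hχ hχ_supp hu
  have integrable_B : Integrable densityB := by
    unfold densityB
    rw [opBh_eq_magneticDeriv]
    exact integrable_sq_mul_inner_magneticDeriv_magneticDeriv_add hVB hχ hχ_supp hu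
  have energy_A : ∫ x, ‖χ x • opAh φ h u x‖ ^ 2 ≤ ∫ x, densityA x :=
    integral_norm_smul_magneticDeriv_sq_le hVA hχ hχ_supp hu
  have energy_B : ∫ x, ‖χ x • opBh φ h u x‖ ^ 2 ≤ ∫ x, densityB x := by
    unfold densityB
    rw [opBh_eq_magneticDeriv]
    exact integral_norm_smul_magneticDeriv_sq_le hVB hχ hχ_supp hu
  refine (add_le_add energy_A energy_B).trans_eq ?_
  rw [← integral_add integrable_A integrable_B]
  congr 1 with x
  linear_combination (2 * χ x ^ 2) * inner_opAh_opAh_add_inner_opBh_opBh (hPu x)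

lemma eLpNorm_smul_opAh_le_and_opBh_le (hφ : ContDiff ℝ 2 φ) (hχ : ContDiff ℝ 1 χ)
    (hχ_supp : HasCompactSupport χ) (hu : ContDiff ℝ 2 u) (hPu : ∀ x, opPh φ h u x = 0)
    {K : ℝ} (hK₀ : 0 ≤ K) (hK : ∀ x, 2 * (1 + h ^ 2 / 4 * lapR (phih φ h) x) * χ x ^ 2
      + h ^ 2 * (pdR 0 χ x ^ 2 + pdR 1 χ x ^ 2) ≤ K) :
    eLpNorm (fun x => χ x • opAh φ h u x) 2 volume ≤
        ENNReal.ofReal √K * eLpNorm u 2 (volume.restrict (tsupport χ)) ∧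
      eLpNorm (fun x => χ x • opBh φ h u x) 2 volume ≤
        ENNReal.ofReal √K * eLpNorm u 2 (volume.restrict (tsupport χ)) := by
  have cont_dχ (j : Fin 2) : Continuous (pdR j χ) := (contDiff_pdR (n := 0) hχ j).continuous
  have cont_lap : Continuous (lapR (phih φ h)) := continuous_lapR (contDiff_phih (n := 2) hφ h)
  have energy : (∫ x, ‖χ x • opAh φ h u x‖ ^ 2) + ∫ x, ‖χ x • opBh φ h u x‖ ^ 2 ≤
      K * ∫ x in tsupport χ, ‖u x‖ ^ 2 :=
    (integral_norm_smul_opAh_sq_add_opBh_sq_le hφ hχ hχ_supp hu hPu).trans <|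
      integral_mul_le_mul_setIntegral hχ_supp (by fun_prop)
        (fun x hx => by
          simp [pdR_eq_zero_of_notMem_tsupport hx, image_eq_zero_of_notMem_tsupport hx])
        hK (hu.continuous.norm.pow 2) fun x => sq_nonneg ‖u x‖
  have energy_A_nonneg : 0 ≤ ∫ x, ‖χ x • opAh φ h u x‖ ^ 2 :=
    integral_nonneg fun x => sq_nonneg _
  have energy_B_nonneg : 0 ≤ ∫ x, ‖χ x • opBh φ h u x‖ ^ 2 :=
    integral_nonneg fun x => sq_nonneg _
  have memLp_u : MemLp u 2 (volume.restrict (tsupport χ)) :=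
    (memLp_two_iff_integrable_sq_norm hu.continuous.aestronglyMeasurable).2
      ((hu.continuous.norm.pow 2).continuousOn.integrableOn_compact hχ_supp)
  have memLp_smul {v : R2 → ℂ} (hv : Continuous v) : MemLp (fun x => χ x • v x) 2 volume :=
    (hχ.continuous.fun_smul hv).memLp_of_hasCompactSupport hχ_supp.smul_right
  have cont_A : Continuous (opAh φ h u) := (contDiff_opAh hφ hu).continuous
  have cont_B : Continuous (opBh φ h u) := (contDiff_opBh hφ hu).continuous
  exact ⟨eLpNorm_two_le_of_integral_norm_sq_le (memLp_smul cont_A) memLp_u hK₀ (by linarith),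
    eLpNorm_two_le_of_integral_norm_sq_le (memLp_smul cont_B) memLp_u hK₀ (by linarith)⟩

lemma sq_div_four_mul_lapR_phih_le {L : ℝ} (hL₀ : 0 ≤ L) (hL : ∀ x, lapR φ x ≤ L)
    (hh : h ∈ Set.Ioc (0 : ℝ) 1) (x : R2) : h ^ 2 / 4 * lapR (phih φ h) x ≤ L / 4 := by
  obtain ⟨h_pos, h_le⟩ := hh
  calc h ^ 2 / 4 * lapR (phih φ h) x
      = h * (lapR φ ((h ^ (-(1 / 2) : ℝ)) • x) / 4) := by
        rw [lapR_phih φ h_pos, Pi.smul_apply, smul_eq_mul, phih]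
        field_simp
    _ ≤ h * (L / 4) := by gcongr; exact hL _
    _ ≤ L / 4 := mul_le_of_le_one_left (by positivity) h_le

lemma eLpNorm_pdR_smul_opAh_le_and_opBh_le (hφ : ContDiff ℝ 2 φ) {L M N : ℝ} (hL₀ : 0 ≤ L)
    (hL : ∀ x, lapR φ x ≤ L) (hh : h ∈ Set.Ioc (0 : ℝ) 1) (hf : ContDiff ℝ 2 f)
    (hf_supp : HasCompactSupport f) (j : Fin 2) (hM : ∀ x, |pdR j f x| ≤ M)
    (hN : ∀ i x, |pdR i (pdR j f) x| ≤ N) (hu : ContDiff ℝ 2 u) (hPu : ∀ x, opPh φ h u x = 0) :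
    eLpNorm (fun x => pdR j f x • opAh φ h u x) 2 volume ≤
        ENNReal.ofReal √((2 + L / 2) * M ^ 2 + 2 * N ^ 2) *
          eLpNorm u 2 (volume.restrict (tsupport f)) ∧
      eLpNorm (fun x => pdR j f x • opBh φ h u x) 2 volume ≤
        ENNReal.ofReal √((2 + L / 2) * M ^ 2 + 2 * N ^ 2) *
          eLpNorm u 2 (volume.restrict (tsupport f)) := by
  have density_le (x : R2) : 2 * (1 + h ^ 2 / 4 * lapR (phih φ h) x) * pdR j f x ^ 2
      + h ^ 2 * (pdR 0 (pdR j f) x ^ 2 + pdR 1 (pdR j f) x ^ 2) ≤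
      (2 + L / 2) * M ^ 2 + 2 * N ^ 2 := by
    have h_sq : h ^ 2 ≤ 1 := pow_le_one₀ hh.1.le hh.2
    have df_sq : pdR j f x ^ 2 ≤ M ^ 2 := sq_le_sq' (abs_le.1 (hM x)).1 (abs_le.1 (hM x)).2
    have ddf_sq (i : Fin 2) : pdR i (pdR j f) x ^ 2 ≤ N ^ 2 :=
      sq_le_sq' (abs_le.1 (hN i x)).1 (abs_le.1 (hN i x)).2
    have ddf_sq₀ := ddf_sq 0
    have ddf_sq₁ := ddf_sq 1
    calc _ ≤ 2 * (1 + L / 4) * M ^ 2 + 1 * (N ^ 2 + N ^ 2) := by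
          gcongr
          exact sq_div_four_mul_lapR_phih_le hL₀ hL hh x
      _ = _ := by ring
  have norm_u_le : eLpNorm u 2 (volume.restrict (tsupport (pdR j f))) ≤
      eLpNorm u 2 (volume.restrict (tsupport f)) :=
    eLpNorm_mono_measure u (Measure.restrict_mono_set _ (tsupport_pdR_subset f j))
  obtain ⟨hA, hB⟩ := eLpNorm_smul_opAh_le_and_opBh_le hφ (contDiff_pdR (n := 1) hf j)
    (hf_supp.fderiv_apply (𝕜 := ℝ) _) hu hPu (by positivity) density_le
  exact ⟨hA.trans (by gcongr), hB.trans (by gcongr)⟩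

lemma eLpNorm_sq_div_four_mul_lapR_smul_le {N : ℝ} (hh : h ∈ Set.Ioc (0 : ℝ) 1)
    (hN : ∀ j x, |pdR j (pdR j f) x| ≤ N) (u : R2 → ℂ) :
    eLpNorm (fun x => (h ^ 2 / 4 * lapR f x) • u x) 2 volume ≤
      ENNReal.ofReal (h * (N / 2)) * eLpNorm u 2 (volume.restrict (tsupport f)) := by
  have : 0 ≤ N := (abs_nonneg _).trans (hN 0 0)
  refine eLpNorm_fun_smul_le_of_abs_le (isClosed_tsupport f).measurableSet
    (fun x hx => by rw [lapR_eq_zero_of_notMem_tsupport hx, mul_zero]) (fun x => ?_) u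
  calc |h ^ 2 / 4 * lapR f x| = h ^ 2 / 4 * |lapR f x| := by
        rw [abs_mul, abs_of_nonneg (by positivity)]
    _ ≤ h * 1 / 4 * (N + N) := by
        have h_nonneg : 0 ≤ h := hh.1.le
        rw [sq]
        gcongr
        · exact hh.2
        · exact (abs_add_le _ _).trans (add_le_add (hN 0 x) (hN 1 x))
    _ = h * (N / 2) := by ring

lemma eLpNorm_opPh_fun_smul_le (hφ : ContDiff ℝ 2 φ) {L M N : ℝ} (hL₀ : 0 ≤ L)
    (hL : ∀ x, lapR φ x ≤ L) (hh : h ∈ Set.Ioc (0 : ℝ) 1) (hf : ContDiff ℝ 2 f)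
    (hf_supp : HasCompactSupport f) (hM : ∀ j x, |pdR j f x| ≤ M)
    (hN : ∀ i j x, |pdR i (pdR j f) x| ≤ N) (hu : ContDiff ℝ 2 u)
    (hPu : ∀ x, opPh φ h u x = 0) :
    eLpNorm (opPh φ h fun x => f x • u x) 2 volume ≤
      ENNReal.ofReal ((2 * √((2 + L / 2) * M ^ 2 + 2 * N ^ 2) + N / 2) * h) *
        eLpNorm u 2 (volume.restrict (tsupport f)) := by
  set K := (2 + L / 2) * M ^ 2 + 2 * N ^ 2
  set U := eLpNorm u 2 (volume.restrict (tsupport f))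
  have h_pos : 0 < h := hh.1
  have : 0 ≤ N := (abs_nonneg _).trans (hN 0 0 0)
  have hA := (eLpNorm_pdR_smul_opAh_le_and_opBh_le hφ hL₀ hL hh hf hf_supp 0 (hM 0)
    (fun i => hN i 0) hu hPu).1
  have hB := (eLpNorm_pdR_smul_opAh_le_and_opBh_le hφ hL₀ hL hh hf hf_supp 1 (hM 1)
    (fun i => hN i 1) hu hPu).2
  have hΔ := eLpNorm_sq_div_four_mul_lapR_smul_le hh (fun j => hN j j) u
  have cont_A : Continuous fun x => pdR 0 f x • opAh φ h u x :=
    (contDiff_pdR (n := 1) hf 0).continuous.fun_smul (contDiff_opAh hφ hu).continuous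
  have cont_B : Continuous fun x => pdR 1 f x • opBh φ h u x :=
    (contDiff_pdR (n := 1) hf 1).continuous.fun_smul (contDiff_opBh hφ hu).continuous
  have cont_Δ : Continuous fun x => (h ^ 2 / 4 * lapR f x) • u x :=
    (continuous_const.mul (continuous_lapR hf)).fun_smul hu.continuous
  have norm_hI : ‖(-(h * I) : ℂ)‖ₑ = ENNReal.ofReal h := by
    rw [← ofReal_norm]
    simp [abs_of_pos h_pos]
  calc eLpNorm (opPh φ h fun x => f x • u x) 2 volume
      ≤ ENNReal.ofReal h * (ENNReal.ofReal √K * U + ENNReal.ofReal √K * U)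
          + ENNReal.ofReal (h * (N / 2)) * U := by
        rw [opPh_fun_smul_of_opPh_eq_zero hφ hf hu hPu]
        refine (eLpNorm_sub_le ((cont_A.add cont_B).const_smul _).aestronglyMeasurable
          cont_Δ.aestronglyMeasurable one_le_two).trans (add_le_add ?_ hΔ)
        rw [eLpNorm_const_smul, norm_hI]
        gcongr
        exact (eLpNorm_add_le cont_A.aestronglyMeasurable cont_B.aestronglyMeasurable
          one_le_two).trans (add_le_add hA hB)
    _ = ENNReal.ofReal ((2 * √K + N / 2) * h) * U := by
        rw [← add_mul, ← ENNReal.ofReal_add (by positivity) (by positivity), ← mul_assoc,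
          ← ENNReal.ofReal_mul h_pos.le, ← add_mul,
          ← ENNReal.ofReal_add (by positivity) (by positivity)]
        congr 2
        ring

end Operators

theorem stmt6_general (φ : R2 → ℝ) (hφ : ContDiff ℝ 2 φ) (hφ_lap : BddAbove (Set.range (lapR φ)))
    (β : R2 → ℝ) (hβ : ContDiff ℝ 2 β) (hβ_supp : HasCompactSupport β) :
    ∃ C > 0, ∀ h ∈ Set.Ioc (0 : ℝ) 1, ∀ u : R2 → ℂ, ContDiff ℝ 2 u →
      (∀ x : R2, opPh φ h u x = 0) →
      ∀ q : R2,
        eLpNorm (opPh φ h (fun x => ((β (x - q) : ℝ) : ℂ) * u x)) 2 volume ≤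
          ENNReal.ofReal (C * h) *
            eLpNorm u 2 (volume.restrict (tsupport fun x => β (x - q))) := by
  obtain ⟨L, hL⟩ := hφ_lap
  obtain ⟨M, hM⟩ := exists_forall_abs_pdR_le (hβ.of_le one_le_two) hβ_supp
  obtain ⟨N, hN⟩ := exists_forall_abs_pdR_pdR_le hβ hβ_supp
  have : 0 ≤ N := (abs_nonneg _).trans (hN 0 0 0)
  refine ⟨2 * √((2 + max L 0 / 2) * M ^ 2 + 2 * N ^ 2) + N / 2 + 1, by positivity,
    fun h hh u hu hPu q => ?_⟩
  have hβq : ContDiff ℝ 2 fun x => β (x - q) := hβ.comp (contDiff_id.sub contDiff_const)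
  have hβq_supp : HasCompactSupport fun x => β (x - q) :=
    hβ_supp.comp_homeomorph (Homeomorph.subRight q)
  simp only [← Complex.real_smul]
  refine (eLpNorm_opPh_fun_smul_le hφ (le_max_right L 0)
    (fun x => (hL ⟨x, rfl⟩).trans (le_max_left L 0)) hh hβq hβq_supp (M := M) (N := N)
    (fun j x => ?_) (fun i j x => ?_) hu hPu).trans ?_
  · simpa only [pdR_comp_sub] using hM j (x - q)
  · simpa only [pdR_comp_sub] using hN i j (x - q)
  · have := hh.1.le
    gcongr ENNReal.ofReal (?_ * _) * _
    exact (lt_add_one _).le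

/-- For a cutoff `β ∈ C_c^∞` and solutions of `P u = 0`,
`sup_q ‖P(β_q u)‖_{L²} ≤ C h ‖u‖_{L²}`. -/
theorem stmt6 (φ : R2 → ℝ) (hφ_smooth : ContDiff ℝ (⊤ : ℕ∞) φ)
    (hφ_bd : ∀ n : ℕ, 2 ≤ n → ∃ C : ℝ, ∀ x : R2, ‖iteratedFDeriv ℝ n φ x‖ ≤ C)
    (β : R2 → ℝ) (hβ_smooth : ContDiff ℝ (⊤ : ℕ∞) β) (hβ_supp : HasCompactSupport β) :
    ∃ C > 0, ∀ h ∈ Set.Ioc (0 : ℝ) 1, ∀ u : SchwartzMap R2 ℂ,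
      (∀ x : R2, opPh φ h (⇑u) x = 0) →
      ∀ q : R2,
        eLpNorm (opPh φ h (fun x => ((β (x - q) : ℝ) : ℂ) * u x)) 2 volume ≤
          ENNReal.ofReal (C * h) * eLpNorm (⇑u) 2 volume := by
  obtain ⟨L, hL⟩ := hφ_bd 2 le_rfl
  have hφ : ContDiff ℝ 2 φ := contDiff_infty.1 hφ_smooth 2
  have hφ_lap : BddAbove (Set.range (lapR φ)) := ⟨L + L, Set.forall_mem_range.2 fun x =>
    add_le_add (abs_le.1 ((abs_pdR_pdR_le hφ 0 0 x).trans (hL x))).2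
      (abs_le.1 ((abs_pdR_pdR_le hφ 1 1 x).trans (hL x))).2⟩
  obtain ⟨C, hC_pos, hC⟩ := stmt6_general φ hφ hφ_lap β
    (contDiff_infty.1 hβ_smooth 2) hβ_supp
  exact ⟨C, hC_pos, fun h hh u hPu q => (hC h hh u (u.smooth 2) hPu q).trans <| by
    gcongr
    exact Measure.restrict_le_self⟩
end
end

section
/- For every λ ≥ 0 and every Schwartz function u : ℝ² → ℂ satisfying Pu = 0, one has ‖Au‖_{L²(ℝ²)} ≤ (‖Δφ‖_{L^∞(ℝ²)}/4 + λ²)^{1/2} ‖u‖_{L²(ℝ²)} and ‖Bu‖_{L²(ℝ²)} ≤ (‖Δφ‖_{L^∞(ℝ²)}/4 + λ²)^{1/2} ‖u‖_{L²(ℝ²)}. -/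
noncomputable section

open MeasureTheory Complex

/-- `A u = (D₁/2 - (∂₂ φ)/2) u`. -/
def opA (φ : R2 → ℝ) (u : R2 → ℂ) (x : R2) : ℂ :=
  Dop 0 u x / 2 - ((pdR 1 φ x / 2 : ℝ) : ℂ) * u x

/-- `B u = (D₂/2 + (∂₁ φ)/2) u`. -/
def opB (φ : R2 → ℝ) (u : R2 → ℂ) (x : R2) : ℂ :=
  Dop 1 u x / 2 + ((pdR 0 φ x / 2 : ℝ) : ℂ) * u x

/-- `P u = A²u + B²u - (Δφ/4) u - λ² u`. -/
def opP (φ : R2 → ℝ) (l : ℝ) (u : R2 → ℂ) (x : R2) : ℂ :=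
  opA φ (opA φ u) x + opB φ (opB φ u) x - ((lapR φ x / 4 : ℝ) : ℂ) * u x
    - ((l : ℂ)) ^ 2 * u x

/- `P u = 0` reads `A²u + B²u = (Δφ/4 + λ²) u`, and `A`, `B` are symmetric operators of the form
`-i∂_v + ψ` with `ψ` real. Pairing with `u` in `L²` gives
`‖Au‖² + ‖Bu‖² = ⟪u, (Δφ/4 + λ²) u⟫`, which is at most `(sup Δφ / 4 + λ²) ‖u‖²`. The growth of `φ`
enters only through `∇φ`: multiplication by it must preserve the Schwartz space. -/

open Function LineDeriv
open scoped SchwartzMap ContDiff InnerProductSpace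

section TemperateGrowth

variable {E F : Type*} [NormedAddCommGroup E] [NormedSpace ℝ E]
  [NormedAddCommGroup F] [NormedSpace ℝ F] {f : E → F}

theorem norm_le_of_norm_fderiv_le_mul_one_add_norm_pow {C : ℝ} {k : ℕ}
    (hf : Differentiable ℝ f) (hC : ∀ x, ‖fderiv ℝ f x‖ ≤ C * (1 + ‖x‖) ^ k) (x : E) :
    ‖f x‖ ≤ (‖f 0‖ + C) * (1 + ‖x‖) ^ (k + 1) := by
  have hC₀ : 0 ≤ C := by simpa using (norm_nonneg _).trans (hC 0)
  have hball : ∀ y ∈ Metric.closedBall (0 : E) ‖x‖, ‖fderiv ℝ f y‖ ≤ C * (1 + ‖x‖) ^ k := by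
    intro y hy
    have hyx : ‖y‖ ≤ ‖x‖ := by simpa using hy
    exact (hC y).trans (by gcongr)
  have hmean : ‖f x - f 0‖ ≤ C * (1 + ‖x‖) ^ k * ‖x‖ := by
    simpa only [sub_zero] using
      (convex_closedBall (0 : E) ‖x‖).norm_image_sub_le_of_norm_fderiv_le
        (fun y _ => hf y) hball (Metric.mem_closedBall_self (norm_nonneg x)) (by simp)
  have hpow : 1 ≤ (1 + ‖x‖) ^ (k + 1) := one_le_pow₀ (by linarith [norm_nonneg x])
  calc
    ‖f x‖ ≤ ‖f 0‖ + ‖f x - f 0‖ := norm_le_insert' _ _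
    _ ≤ ‖f 0‖ * (1 + ‖x‖) ^ (k + 1) + C * (1 + ‖x‖) ^ k * (1 + ‖x‖) := by
      gcongr
      · exact le_mul_of_one_le_right (norm_nonneg _) hpow
      · exact hmean.trans (by gcongr; linarith)
    _ = (‖f 0‖ + C) * (1 + ‖x‖) ^ (k + 1) := by ring

theorem hasTemperateGrowth_of_forall_ge {m : ℕ} (hf : ContDiff ℝ ∞ f)
    (hm : ∀ n ≥ m, ∃ k C, ∀ x, ‖iteratedFDeriv ℝ n f x‖ ≤ C * (1 + ‖x‖) ^ k) :
    f.HasTemperateGrowth := by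
  refine ⟨hf, fun n => ?_⟩
  rcases le_total m n with hmn | hnm
  · exact hm n hmn
  · refine Nat.decreasingInduction (fun j _ ⟨k, C, hC⟩ => ?_) (hm m le_rfl) hnm
    refine ⟨k + 1, ‖iteratedFDeriv ℝ j f 0‖ + C,
      norm_le_of_norm_fderiv_le_mul_one_add_norm_pow
        (hf.differentiable_iteratedFDeriv (mod_cast WithTop.coe_lt_top j)) fun x => ?_⟩
    simpa only [norm_fderiv_iteratedFDeriv] using hC x

theorem hasTemperateGrowth_fderiv (hf : f.HasTemperateGrowth) :
    (fderiv ℝ f).HasTemperateGrowth := by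
  refine ⟨hf.1.fderiv_right (by simp), fun n => ?_⟩
  simpa only [norm_iteratedFDeriv_fderiv] using hf.2 (n + 1)

theorem norm_fderiv_fderiv_apply_le {x : E} (hf : DifferentiableAt ℝ (fderiv ℝ f) x) (v w : E) :
    ‖fderiv ℝ (fun y => fderiv ℝ f y v) x w‖ ≤ ‖iteratedFDeriv ℝ 2 f x‖ * ‖w‖ * ‖v‖ := by
  have hderiv : fderiv ℝ (fun y => fderiv ℝ f y v) x w = fderiv ℝ (fderiv ℝ f) x w v := by
    rw [fderiv_clm_apply hf (differentiableAt_const v)]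
    simp
  have hnorm : ‖fderiv ℝ (fderiv ℝ f) x‖ = ‖iteratedFDeriv ℝ 2 f x‖ := by
    rw [← norm_iteratedFDeriv_one, norm_iteratedFDeriv_fderiv]
  rw [hderiv, ← hnorm]
  exact ContinuousLinearMap.le_opNorm₂ _ _ _

end TemperateGrowth

theorem re_inner_le_of_ae_re_inner_le {α 𝕜 V : Type*} [MeasurableSpace α] {μ : Measure α}
    [RCLike 𝕜] [NormedAddCommGroup V] [InnerProductSpace 𝕜 V] {K : ℝ} {f g : Lp V 2 μ}
    (h : ∀ᵐ x ∂μ, RCLike.re ⟪f x, g x⟫_𝕜 ≤ K * ‖f x‖ ^ 2) :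
    RCLike.re ⟪f, g⟫_𝕜 ≤ K * ‖f‖ ^ 2 := by
  have hnorm : ‖f‖ ^ 2 = ∫ x, ‖f x‖ ^ 2 ∂μ := by
    simp_rw [← inner_self_eq_norm_sq (𝕜 := 𝕜), L2.inner_def]
    exact (integral_re (L2.integrable_inner f f)).symm
  have hint : Integrable (fun x => ‖f x‖ ^ 2) μ := (Lp.memLp f).integrable_norm_pow two_ne_zero
  rw [L2.inner_def, ← integral_re (L2.integrable_inner f g), hnorm, ← integral_const_mul]
  exact integral_mono_ae (L2.integrable_inner f g).re (hint.const_mul K) h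

section KineticMomentum

variable {E V : Type*} [NormedAddCommGroup E] [NormedSpace ℝ E]
  [NormedAddCommGroup V] [InnerProductSpace ℂ V]

/-- The symmetric first-order operator `-i∂_v + ψ` on Schwartz functions: the component along `v` of
the momentum of a quantum particle in a magnetic field with vector potential `-ψ`. Following the
convention of `SchwartzMap.smulLeftCLM`, the term `ψ` is dropped unless `ψ` has temperate growth. -/
def kineticMomentum (v : E) (ψ : E → ℝ) : 𝓢(E, V) →L[ℂ] 𝓢(E, V) :=
  (-I) • lineDerivOpCLM ℂ 𝓢(E, V) v + SchwartzMap.smulLeftCLM V (fun x => (ψ x : ℂ))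

theorem kineticMomentum_apply (v : E) {ψ : E → ℝ} (hψ : ψ.HasTemperateGrowth) (f : 𝓢(E, V))
    (x : E) : kineticMomentum v ψ f x = (-I) • fderiv ℝ f x v + (ψ x : ℂ) • f x := by
  have hψ' : (fun x => (ψ x : ℂ)).HasTemperateGrowth := by fun_prop
  simp [kineticMomentum, SchwartzMap.smulLeftCLM_apply_apply hψ',
    SchwartzMap.lineDerivOp_apply_eq_fderiv]

end KineticMomentum

section SchwartzL2

variable {E V : Type*} [NormedAddCommGroup E] [NormedSpace ℝ E] [FiniteDimensional ℝ E]
  [MeasurableSpace E] [BorelSpace E] [NormedAddCommGroup V] [InnerProductSpace ℂ V]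
  {μ : Measure E}

theorem eLpNorm_le_of_norm_toLp_le [μ.HasTemperateGrowth] {p : ENNReal} [Fact (1 ≤ p)]
    {C : ℝ} {f g : 𝓢(E, V)} (h : ‖f.toLp p μ‖ ≤ C * ‖g.toLp p μ‖) :
    eLpNorm f p μ ≤ ENNReal.ofReal C * eLpNorm g p μ := by
  have hofReal (q : 𝓢(E, V)) : ENNReal.ofReal ‖q.toLp p μ‖ = eLpNorm q p μ := by
    rw [SchwartzMap.norm_toLp, ENNReal.ofReal_toReal (q.memLp p μ).eLpNorm_ne_top]
  calc
    eLpNorm f p μ = ENNReal.ofReal ‖f.toLp p μ‖ := (hofReal f).symm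
    _ ≤ ENNReal.ofReal (C * ‖g.toLp p μ‖) := ENNReal.ofReal_le_ofReal h
    _ = ENNReal.ofReal C * eLpNorm g p μ := by
      rw [ENNReal.ofReal_mul' (norm_nonneg _), hofReal]

theorem inner_toLp_lineDerivOp_left [μ.IsAddHaarMeasure] (v : E) (f g : 𝓢(E, V)) :
    ⟪(∂_{v} f).toLp 2 μ, g.toLp 2 μ⟫_ℂ = -⟪f.toLp 2 μ, (∂_{v} g).toLp 2 μ⟫_ℂ := by
  let L : V →L[ℝ] V →L[ℝ] ℂ := LinearMap.mkContinuous₂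
    (LinearMap.mk₂ ℝ (fun a b : V => ⟪a, b⟫_ℂ) inner_add_left
      (fun c a b => inner_smul_left_eq_smul a b c) inner_add_right
      (fun c a b => inner_smul_right_eq_smul a b c)) 1
    (fun a b => by simpa using norm_inner_le_norm a b)
  have hparts : ∫ x, ⟪f x, ∂_{v} g x⟫_ℂ ∂μ = -∫ x, ⟪∂_{v} f x, g x⟫_ℂ ∂μ :=
    SchwartzMap.integral_bilinear_lineDerivOp_right_eq_neg_left f g L v
  rw [SchwartzMap.inner_toL2_toL2_eq _ _ μ, SchwartzMap.inner_toL2_toL2_eq _ _ μ, hparts, neg_neg]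

theorem inner_toLp_smulLeftCLM_ofReal_left [μ.HasTemperateGrowth] {ψ : E → ℝ}
    (hψ : ψ.HasTemperateGrowth) (f g : 𝓢(E, V)) :
    ⟪(SchwartzMap.smulLeftCLM V (fun x => (ψ x : ℂ)) f).toLp 2 μ, g.toLp 2 μ⟫_ℂ =
      ⟪f.toLp 2 μ, (SchwartzMap.smulLeftCLM V (fun x => (ψ x : ℂ)) g).toLp 2 μ⟫_ℂ := by
  have hψ' : (fun x => (ψ x : ℂ)).HasTemperateGrowth := by fun_prop
  simp [SchwartzMap.smulLeftCLM_apply_apply hψ', inner_smul_left_eq_smul, inner_smul_right_eq_smul]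

theorem inner_toLp_kineticMomentum_left [μ.IsAddHaarMeasure] (v : E) {ψ : E → ℝ}
    (hψ : ψ.HasTemperateGrowth) (f g : 𝓢(E, V)) :
    ⟪(kineticMomentum v ψ f).toLp 2 μ, g.toLp 2 μ⟫_ℂ =
      ⟪f.toLp 2 μ, (kineticMomentum v ψ g).toLp 2 μ⟫_ℂ := by
  have htoLp (q : 𝓢(E, V)) : (kineticMomentum v ψ q).toLp 2 μ =
      (-I) • (∂_{v} q).toLp 2 μ +
        (SchwartzMap.smulLeftCLM V (fun x => (ψ x : ℂ)) q).toLp 2 μ := by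
    simp only [← SchwartzMap.toLpCLM_apply (𝕜 := ℂ), ← map_smul, ← map_add]
    rfl
  rw [htoLp f, htoLp g, inner_add_left, inner_add_right, inner_smul_left, inner_smul_right,
    inner_toLp_lineDerivOp_left, inner_toLp_smulLeftCLM_ofReal_left hψ]
  simp

section SumOfSquares

variable [μ.IsAddHaarMeasure] {ι : Type*} [Fintype ι] (v : ι → E)
  {ψ : ι → E → ℝ} {K : ℝ} {u : 𝓢(E, V)}

theorem sum_norm_sq_toLp_kineticMomentum_le (hψ : ∀ i, (ψ i).HasTemperateGrowth)
    (hu : ∀ x,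
      RCLike.re ⟪u x, ∑ i, kineticMomentum (v i) (ψ i) (kineticMomentum (v i) (ψ i) u) x⟫_ℂ ≤
        K * ‖u x‖ ^ 2) :
    ∑ i, ‖(kineticMomentum (v i) (ψ i) u).toLp 2 μ‖ ^ 2 ≤ K * ‖u.toLp 2 μ‖ ^ 2 := by
  let T (i : ι) : 𝓢(E, V) →L[ℂ] 𝓢(E, V) := kineticMomentum (v i) (ψ i)
  have hnorm (i : ι) :
      ‖(T i u).toLp 2 μ‖ ^ 2 = RCLike.re ⟪u.toLp 2 μ, (T i (T i u)).toLp 2 μ⟫_ℂ := by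
    rw [← inner_self_eq_norm_sq (𝕜 := ℂ), inner_toLp_kineticMomentum_left (v i) (hψ i)]
  have hsum : ∑ i, (T i (T i u)).toLp 2 μ = (∑ i, T i (T i u)).toLp 2 μ := by
    simp only [← SchwartzMap.toLpCLM_apply (𝕜 := ℂ), map_sum]
  calc
    ∑ i, ‖(T i u).toLp 2 μ‖ ^ 2 = RCLike.re ⟪u.toLp 2 μ, (∑ i, T i (T i u)).toLp 2 μ⟫_ℂ := by
      rw [← hsum, inner_sum, map_sum]
      exact Finset.sum_congr rfl fun i _ => hnorm i
    _ ≤ K * ‖u.toLp 2 μ‖ ^ 2 := by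
      refine re_inner_le_of_ae_re_inner_le ?_
      filter_upwards [u.coeFn_toLp 2 μ, (∑ i, T i (T i u)).coeFn_toLp 2 μ] with x hux hTx
      rw [hux, hTx, sum_apply]
      exact hu x

theorem eLpNorm_kineticMomentum_le (hψ : ∀ i, (ψ i).HasTemperateGrowth)
    (hu : ∀ x,
      RCLike.re ⟪u x, ∑ i, kineticMomentum (v i) (ψ i) (kineticMomentum (v i) (ψ i) u) x⟫_ℂ ≤
        K * ‖u x‖ ^ 2) (i : ι) :
    eLpNorm (kineticMomentum (v i) (ψ i) u) 2 μ ≤ ENNReal.ofReal √K * eLpNorm u 2 μ := by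
  refine eLpNorm_le_of_norm_toLp_le ?_
  have hsq : ‖(kineticMomentum (v i) (ψ i) u).toLp 2 μ‖ ^ 2 ≤ K * ‖u.toLp 2 μ‖ ^ 2 :=
    (Finset.single_le_sum (f := fun j => ‖(kineticMomentum (v j) (ψ j) u).toLp 2 μ‖ ^ 2)
      (fun j _ => sq_nonneg _) (Finset.mem_univ i)).trans
      (sum_norm_sq_toLp_kineticMomentum_le v hψ hu)
  calc
    ‖(kineticMomentum (v i) (ψ i) u).toLp 2 μ‖ ≤ √(K * ‖u.toLp 2 μ‖ ^ 2) :=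
      Real.le_sqrt_of_sq_le hsq
    _ = √K * ‖u.toLp 2 μ‖ := by
      rw [Real.sqrt_mul' K (sq_nonneg _), Real.sqrt_sq (norm_nonneg _)]

end SumOfSquares

end SchwartzL2

section Planar

variable {φ : R2 → ℝ}

/-- The vector `v j = e_j / 2`: with `ψ = halfRotatedGradient φ`, one has `A = -i∂_{v 0} + ψ 0` and
`B = -i∂_{v 1} + ψ 1`. -/
def halfCoordVector (j : Fin 2) : R2 := (1 / 2 : ℝ) • EuclideanSpace.single j 1

/-- The rotated gradient `(-∂₂φ, ∂₁φ) / 2`, whose components are the zeroth-order terms of the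
operators `A` and `B`. -/
def halfRotatedGradient (φ : R2 → ℝ) : Fin 2 → R2 → ℝ :=
  ![fun x => -(pdR 1 φ x / 2), fun x => pdR 0 φ x / 2]

theorem hasTemperateGrowth_pdR (hφ : φ.HasTemperateGrowth) (j : Fin 2) :
    (pdR j φ).HasTemperateGrowth :=
  (ContinuousLinearMap.apply ℝ ℝ (EuclideanSpace.single j 1 : R2)).hasTemperateGrowth.comp
    (hasTemperateGrowth_fderiv hφ)

theorem hasTemperateGrowth_halfRotatedGradient (hφ : φ.HasTemperateGrowth) (j : Fin 2) :
    (halfRotatedGradient φ j).HasTemperateGrowth := by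
  have h₀ := hasTemperateGrowth_pdR hφ 0
  have h₁ := hasTemperateGrowth_pdR hφ 1
  fin_cases j
  · simp only [halfRotatedGradient, div_eq_mul_inv]
    exact (h₁.mul (.const _)).neg
  · exact h₀.mul (.const _)

theorem kineticMomentum_eq_opA (hφ : φ.HasTemperateGrowth) (f : 𝓢(R2, ℂ)) :
    ⇑(kineticMomentum (halfCoordVector 0) (halfRotatedGradient φ 0) f) = opA φ f := by
  ext x
  rw [kineticMomentum_apply _ (hasTemperateGrowth_halfRotatedGradient hφ 0)]
  simp only [halfCoordVector, halfRotatedGradient, opA, Dop, pdC, map_smul, real_smul, smul_eq_mul,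
    Matrix.cons_val_zero]
  push_cast
  ring

theorem kineticMomentum_eq_opB (hφ : φ.HasTemperateGrowth) (f : 𝓢(R2, ℂ)) :
    ⇑(kineticMomentum (halfCoordVector 1) (halfRotatedGradient φ 1) f) = opB φ f := by
  ext x
  rw [kineticMomentum_apply _ (hasTemperateGrowth_halfRotatedGradient hφ 1)]
  simp only [halfCoordVector, halfRotatedGradient, opB, Dop, pdC, map_smul, real_smul, smul_eq_mul,
    Matrix.cons_val_one, Matrix.cons_val_fin_one]
  push_cast
  ring

theorem abs_lapR_le (hφ : ContDiff ℝ 2 φ) (x : R2) :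
    |lapR φ x| ≤ 2 * ‖iteratedFDeriv ℝ 2 φ x‖ := by
  have hpdR (j : Fin 2) : |pdR j (pdR j φ) x| ≤ ‖iteratedFDeriv ℝ 2 φ x‖ := by
    have hdiff : DifferentiableAt ℝ (fderiv ℝ φ) x :=
      (hφ.fderiv_right (m := 1) (by norm_num)).differentiable one_ne_zero x
    have hnorm := norm_fderiv_fderiv_apply_le hdiff (EuclideanSpace.single j 1)
      (EuclideanSpace.single j 1)
    rw [PiLp.norm_single, norm_one, mul_one, mul_one] at hnorm
    exact hnorm
  calc
    |lapR φ x| ≤ |pdR 0 (pdR 0 φ) x| + |pdR 1 (pdR 1 φ) x| := abs_add_le _ _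
    _ ≤ 2 * ‖iteratedFDeriv ℝ 2 φ x‖ := by linarith [hpdR 0, hpdR 1]

theorem lapR_le_iSup_abs (hφ : ContDiff ℝ 2 φ)
    (hbd : ∃ C, ∀ x, ‖iteratedFDeriv ℝ 2 φ x‖ ≤ C) (x : R2) : lapR φ x ≤ ⨆ y, |lapR φ y| := by
  obtain ⟨C, hC⟩ := hbd
  have hbdd : BddAbove (Set.range fun y => |lapR φ y|) := by
    refine ⟨2 * C, Set.forall_mem_range.2 fun y => (abs_lapR_le hφ y).trans ?_⟩
    gcongr
    exact hC y
  exact (le_abs_self _).trans (le_ciSup hbdd x)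

end Planar

theorem stmt12_general {φ : R2 → ℝ} (hφ : φ.HasTemperateGrowth) {M l : ℝ}
    (hM : ∀ x, lapR φ x ≤ M) {u : 𝓢(R2, ℂ)} (hu : ∀ x, opP φ l u x = 0) :
    eLpNorm (opA φ u) 2 volume ≤ ENNReal.ofReal √(M / 4 + l ^ 2) * eLpNorm u 2 volume ∧
      eLpNorm (opB φ u) 2 volume ≤ ENNReal.ofReal √(M / 4 + l ^ 2) * eLpNorm u 2 volume := by
  have hbound := eLpNorm_kineticMomentum_le (μ := volume) (u := u) (K := M / 4 + l ^ 2)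
    halfCoordVector (hasTemperateGrowth_halfRotatedGradient hφ) fun x => ?_
  · rw [← kineticMomentum_eq_opA hφ, ← kineticMomentum_eq_opB hφ]
    exact ⟨hbound 0, hbound 1⟩
  · have hsquares : opA φ (opA φ u) x + opB φ (opB φ u) x = (lapR φ x / 4 + l ^ 2 : ℝ) • u x := by
      have hux := hu x
      rw [opP] at hux
      rw [real_smul]
      push_cast at hux ⊢
      linear_combination hux
    simp only [Fin.sum_univ_two, kineticMomentum_eq_opA hφ, kineticMomentum_eq_opB hφ, hsquares]
    rw [inner_smul_right_eq_smul, RCLike.smul_re, inner_self_eq_norm_sq]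
    gcongr
    exact hM x

/-- For solutions of `P u = 0`, `‖Au‖_{L²}` and `‖Bu‖_{L²}` are bounded by
`(‖Δφ‖_∞/4 + λ²)^{1/2} ‖u‖_{L²}`. -/
theorem stmt12 (φ : R2 → ℝ) (hφ_smooth : ContDiff ℝ (⊤ : ℕ∞) φ)
    (hφ_bd : ∀ n : ℕ, 2 ≤ n → ∃ C : ℝ, ∀ x : R2, ‖iteratedFDeriv ℝ n φ x‖ ≤ C) :
    ∀ l : ℝ, 0 ≤ l → ∀ u : SchwartzMap R2 ℂ,
      (∀ x : R2, opP φ l (⇑u) x = 0) →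
      eLpNorm (opA φ (⇑u)) 2 volume ≤
          ENNReal.ofReal (Real.sqrt ((⨆ x : R2, |lapR φ x|) / 4 + l ^ 2)) *
            eLpNorm (⇑u) 2 volume ∧
      eLpNorm (opB φ (⇑u)) 2 volume ≤
          ENNReal.ofReal (Real.sqrt ((⨆ x : R2, |lapR φ x|) / 4 + l ^ 2)) *
            eLpNorm (⇑u) 2 volume := by
  intro l _ u hu
  have hφ : φ.HasTemperateGrowth :=
    hasTemperateGrowth_of_forall_ge hφ_smooth fun n hn => ⟨0, by simpa using hφ_bd n hn⟩
  exact stmt12_general hφ (lapR_le_iSup_abs (contDiff_infty.1 hφ.1 2) (hφ_bd 2 le_rfl)) hu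
end
end
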